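/- arXiv:2505.00486 — 10 statements merged into one kernel-verified Lean document; each statement's English description precedes it below -/
import Mathlib

section
/- Let t, n be positive integers, let ℓ be a natural number, and let T : Fin ℓ → ℤ be a sequence with T i ≥ 1 for every i. Then the number of nonempty subsets S ⊆ Fin ℓ such that ∑_{i∈S} T i ≥ t·n and n divides ∑_{i∈S} T i is at least 2^(ℓ − t·n + 1) − 1, where the exponent ℓ − t·n + 1 is interpreted via truncated (natural-number) subtraction, so the bound is trivially 0 when ℓ + 1 ≤ t·n. -/
/-!
Every positive multiple of `m = t * n` is a multiple of `n` that is at least `t * n`, so it suffices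
to find many subsets whose sum vanishes in `ZMod m`. This is Olson's bound: in a finite abelian
group `G`, a sequence of length `ℓ` that attains `g` as a subset sum attains it at least
`2 ^ (ℓ + 1 - D(G))` times, where the Davenport constant satisfies `D(G) ≤ |G|`.

Olson's bound goes by induction on `ℓ`. Suppose `ℓ ≥ D(G)` and `A` has sum `g`. Negating the terms
indexed by `A` and taking a nonempty zero-sum subset `W` of the new sequence, the set `A ∆ W` is a
second one with sum `g`. If `x` lies in exactly one of the two, then the sequence without its term
`f x` attains both `g` and `g - f x`, so that the lower bound doubles.
-/

section

open Finset

variable {ι G : Type*} [AddCommGroup G]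

/-- The Davenport constant of an abelian group: the least `d` such that every sequence of length `d`
has a nonempty subsequence with sum zero. No such `d` exists when `G` is infinite, and the value is
then the junk `sInf ∅ = 0`. -/
noncomputable def davenportConstant (G : Type*) [AddCommGroup G] : ℕ :=
  sInf {d | ∀ f : Fin d → G, ∃ S : Finset (Fin d), S.Nonempty ∧ ∑ i ∈ S, f i = 0}

lemma exists_nonempty_sum_eq_zero_of_natCard [Finite G] (f : Fin (Nat.card G) → G) :
    ∃ S : Finset (Fin (Nat.card G)), S.Nonempty ∧ ∑ i ∈ S, f i = 0 := by
  let initial (j : Fin (Nat.card G + 1)) : Finset (Fin (Nat.card G)) := {k | k.castSucc < j}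
  have initial_subset {i j} (hij : i < j) : initial i ⊆ initial j :=
    monotone_filter_right _ fun _ _ hk ↦ hk.trans hij
  obtain ⟨i, j, hij, hsum⟩ : ∃ i j, i < j ∧ ∑ k ∈ initial i, f k = ∑ k ∈ initial j, f k := by
    have := Fintype.ofFinite G
    obtain ⟨i, j, hne, hsum⟩ :=
      Fintype.exists_ne_map_eq_of_card_lt (fun j ↦ ∑ k ∈ initial j, f k) (by simp)
    exact hne.lt_or_gt.elim (⟨i, j, ·, hsum⟩) (⟨j, i, ·, hsum.symm⟩)
  refine ⟨initial j \ initial i, ⟨i.castPred (Fin.ne_last_of_lt hij), by simp [initial, hij]⟩, ?_⟩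
  rw [sum_sdiff_eq_sub (initial_subset hij), hsum, sub_self]

lemma davenportConstant_le_natCard [Finite G] : davenportConstant G ≤ Nat.card G :=
  Nat.sInf_le exists_nonempty_sum_eq_zero_of_natCard

lemma exists_nonempty_sum_eq_zero_of_davenportConstant [Finite G]
    (f : Fin (davenportConstant G) → G) :
    ∃ S : Finset (Fin (davenportConstant G)), S.Nonempty ∧ ∑ i ∈ S, f i = 0 :=
  Nat.sInf_mem (s := {d | ∀ f : Fin d → G, ∃ S : Finset (Fin d), S.Nonempty ∧ ∑ i ∈ S, f i = 0})
    ⟨_, exists_nonempty_sum_eq_zero_of_natCard⟩ f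

lemma exists_subset_sum_eq_zero_of_davenportConstant_le [Finite G] {s : Finset ι} (f : ι → G)
    (hs : davenportConstant G ≤ #s) : ∃ W ⊆ s, W.Nonempty ∧ ∑ i ∈ W, f i = 0 := by
  obtain ⟨r, hrs, hr⟩ := exists_subset_card_eq hs
  let e : Fin (davenportConstant G) ↪ ι :=
    (r.equivFinOfCardEq hr).symm.toEmbedding.trans (.subtype _)
  obtain ⟨S, hS, hsum⟩ := exists_nonempty_sum_eq_zero_of_davenportConstant (f ∘ e)
  refine ⟨S.map e, fun x hx ↦ ?_, hS.map, (sum_map S e f).trans hsum⟩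
  obtain ⟨k, -, rfl⟩ := mem_map.1 hx
  exact hrs ((r.equivFinOfCardEq hr).symm k).2

lemma sum_symmDiff_eq_add_sum_ite [DecidableEq ι] (f : ι → G) (A B : Finset ι) :
    ∑ i ∈ symmDiff A B, f i = ∑ i ∈ A, f i + ∑ i ∈ B, if i ∈ A then -f i else f i := by
  have hsymm : ∑ i ∈ symmDiff A B, f i = ∑ i ∈ A \ B, f i + ∑ i ∈ B \ A, f i :=
    sum_union disjoint_sdiff_sdiff
  rw [hsymm, ← sum_inter_add_sum_sdiff A B f, sum_ite, sum_neg_distrib, filter_mem_eq_inter,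
    filter_notMem_eq_sdiff, inter_comm B A]
  abel

lemma exists_ne_sum_eq_of_davenportConstant_le [Finite G] {s A : Finset ι} (f : ι → G)
    (hs : davenportConstant G ≤ #s) (hA : A ⊆ s) :
    ∃ B ⊆ s, B ≠ A ∧ ∑ i ∈ B, f i = ∑ i ∈ A, f i := by
  classical
  obtain ⟨W, hWs, hW, hsum⟩ :=
    exists_subset_sum_eq_zero_of_davenportConstant_le (fun i ↦ if i ∈ A then -f i else f i) hs
  refine ⟨symmDiff A W, symmDiff_le_sup.trans (union_subset hA hWs), ?_, ?_⟩
  · exact fun h ↦ hW.ne_empty (symmDiff_eq_left.1 h)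
  · rw [sum_symmDiff_eq_add_sum_ite, hsum, add_zero]

variable [DecidableEq G]

/-- The subsets of `s` over which `f` sums to `g`. In the literature on zero-sum sequences, the
number of these is written `N_g(T)` for the sequence `T` of the values of `f` on `s`. -/
def subsetsWithSum (s : Finset ι) (f : ι → G) (g : G) : Finset (Finset ι) :=
  {A ∈ s.powerset | ∑ i ∈ A, f i = g}

lemma mem_subsetsWithSum {s A : Finset ι} {f : ι → G} {g : G} :
    A ∈ subsetsWithSum s f g ↔ A ⊆ s ∧ ∑ i ∈ A, f i = g := by
  rw [subsetsWithSum, mem_filter, mem_powerset]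

lemma card_subsetsWithSum_insert [DecidableEq ι] {s : Finset ι} {x : ι} (hx : x ∉ s)
    (f : ι → G) (g : G) :
    #(subsetsWithSum (insert x s) f g) =
      #(subsetsWithSum s f g) + #(subsetsWithSum s f (g - f x)) := by
  simp only [subsetsWithSum, card_filter, sum_powerset_insert hx]
  congr 1
  refine sum_congr rfl fun A hA ↦ ?_
  simp only [sum_insert (notMem_mono (mem_powerset.1 hA) hx), eq_sub_iff_add_eq']

lemma one_lt_card_subsetsWithSum [Finite G] {s : Finset ι} {f : ι → G} {g : G}
    (hs : davenportConstant G ≤ #s) (hg : (subsetsWithSum s f g).Nonempty) :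
    1 < #(subsetsWithSum s f g) := by
  obtain ⟨A, hA⟩ := hg
  obtain ⟨hAs, hAsum⟩ := mem_subsetsWithSum.1 hA
  obtain ⟨B, hBs, hBA, hBsum⟩ := exists_ne_sum_eq_of_davenportConstant_le f hs hAs
  exact one_lt_card.2 ⟨B, mem_subsetsWithSum.2 ⟨hBs, hBsum.trans hAsum⟩, A, hA, hBA⟩

lemma exists_mem_subsetsWithSum_erase_nonempty [DecidableEq ι] {s : Finset ι} {f : ι → G} {g : G}
    (h : 1 < #(subsetsWithSum s f g)) :
    ∃ x ∈ s, (subsetsWithSum (s.erase x) f g).Nonempty ∧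
      (subsetsWithSum (s.erase x) f (g - f x)).Nonempty := by
  obtain ⟨A, hA, B, hB, hAB⟩ := one_lt_card.1 h
  wlog hnot : ¬A ⊆ B generalizing A B
  · exact this B hB A hA hAB.symm fun hBA ↦ hAB ((not_not.1 hnot).antisymm hBA)
  obtain ⟨x, hxA, hxB⟩ := not_subset.1 hnot
  obtain ⟨hAs, hAsum⟩ := mem_subsetsWithSum.1 hA
  obtain ⟨hBs, hBsum⟩ := mem_subsetsWithSum.1 hB
  refine ⟨x, hAs hxA, ⟨B, mem_subsetsWithSum.2 ⟨subset_erase.2 ⟨hBs, hxB⟩, hBsum⟩⟩,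
    ⟨A.erase x, mem_subsetsWithSum.2 ⟨erase_subset_erase x hAs, ?_⟩⟩⟩
  rw [sum_erase_eq_sub hxA, hAsum]

theorem two_pow_le_card_subsetsWithSum [Finite G] {s : Finset ι} {f : ι → G} {g : G}
    (hg : (subsetsWithSum s f g).Nonempty) :
    2 ^ (#s + 1 - davenportConstant G) ≤ #(subsetsWithSum s f g) := by
  classical
  induction s using Finset.strongInduction generalizing g with
  | H s ih =>
    obtain hs | hs := lt_or_ge #s (davenportConstant G)
    · rw [Nat.sub_eq_zero_of_le hs, pow_zero]
      exact hg.card_pos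
    · obtain ⟨x, hx, hg₀, hg₁⟩ :=
        exists_mem_subsetsWithSum_erase_nonempty (one_lt_card_subsetsWithSum hs hg)
      have hexp : #s + 1 - davenportConstant G =
          #(s.erase x) + 1 - davenportConstant G + 1 := by
        rw [card_erase_add_one hx, Nat.sub_add_comm hs]
      calc 2 ^ (#s + 1 - davenportConstant G)
          = 2 ^ (#(s.erase x) + 1 - davenportConstant G) +
              2 ^ (#(s.erase x) + 1 - davenportConstant G) := by rw [hexp, pow_succ, mul_two]
        _ ≤ #(subsetsWithSum (s.erase x) f g) + #(subsetsWithSum (s.erase x) f (g - f x)) :=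
          add_le_add (ih _ (erase_ssubset hx) hg₀) (ih _ (erase_ssubset hx) hg₁)
        _ = #(subsetsWithSum s f g) := by
          rw [← card_subsetsWithSum_insert (notMem_erase x s), insert_erase hx]

theorem two_pow_sub_one_le_card_nonempty_dvd_sum [Fintype ι] (m : ℕ) [NeZero m] (T : ι → ℤ) :
    2 ^ (Fintype.card ι + 1 - m) - 1 ≤
      Nat.card {S : Finset ι // S.Nonempty ∧ (m : ℤ) ∣ ∑ i ∈ S, T i} := by
  classical
  have hD : davenportConstant (ZMod m) ≤ m :=
    davenportConstant_le_natCard.trans_eq (Nat.card_zmod m)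
  let F := subsetsWithSum univ (fun i ↦ (T i : ZMod m)) 0
  have hempty : ∅ ∈ F := mem_subsetsWithSum.2 ⟨empty_subset _, sum_empty⟩
  have hF : 2 ^ (Fintype.card ι + 1 - m) ≤ #F :=
    calc 2 ^ (Fintype.card ι + 1 - m)
        ≤ 2 ^ (#(univ : Finset ι) + 1 - davenportConstant (ZMod m)) := by
          rw [card_univ]
          gcongr
          exact one_le_two
      _ ≤ #F := two_pow_le_card_subsetsWithSum ⟨∅, hempty⟩
  have hmem (S : Finset ι) : S ∈ F.erase ∅ ↔ S.Nonempty ∧ (m : ℤ) ∣ ∑ i ∈ S, T i := by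
    simp only [F, mem_erase, mem_subsetsWithSum, subset_univ, true_and, nonempty_iff_ne_empty,
      ← Int.cast_sum, ZMod.intCast_zmod_eq_zero_iff_dvd]
  calc 2 ^ (Fintype.card ι + 1 - m) - 1
      ≤ #(F.erase ∅) := (Nat.sub_le_sub_right hF 1).trans_eq (card_erase_of_mem hempty).symm
    _ = Nat.card {S : Finset ι // S.Nonempty ∧ (m : ℤ) ∣ ∑ i ∈ S, T i} :=
      (Nat.subtype_card _ hmem).symm

end

theorem stmt0 (t n ℓ : ℕ) (ht : 1 ≤ t) (hn : 1 ≤ n) (T : Fin ℓ → ℤ)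
    (hT : ∀ i, 1 ≤ T i) :
    2 ^ (ℓ + 1 - t * n) - 1 ≤
      Nat.card {S : Finset (Fin ℓ) //
        S.Nonempty ∧ ((t * n : ℕ) : ℤ) ≤ ∑ i ∈ S, T i ∧ (n : ℤ) ∣ ∑ i ∈ S, T i} := by
  have : NeZero (t * n) := ⟨by positivity⟩
  have hbound := two_pow_sub_one_le_card_nonempty_dvd_sum (t * n) T
  rw [Fintype.card_fin] at hbound
  refine hbound.trans (Nat.card_mono (Set.toFinite _) fun S ⟨hS, hdvd⟩ ↦ ⟨hS, ?_, ?_⟩)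
  · have hpos : 0 < ∑ i ∈ S, T i := Finset.sum_pos (fun i _ ↦ hT i) hS
    exact Int.le_of_dvd hpos hdvd
  · exact (Int.natCast_dvd_natCast.2 (n.dvd_mul_left t)).trans hdvd
end

section
/- For all integers m ≥ 0 and h, n ≥ 1, the sum of the binomial coefficients C(m, j·n) over all integers j ≥ h (equivalently, over j in the range h ≤ j ≤ m, since the terms vanish for j·n > m) is at least 2^(m − h·n + 1) − 1, where the exponent m − h·n + 1 is interpreted via truncated (natural-number) subtraction. -/
/-!
For `h * n ≤ m`, split a binary string of length `m` into a prefix of length `p = m + 1 - h * n`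
and a suffix of length `q = h * n - 1`. If the prefix has weight `w`, then the suffix can bring the
total weight to any prescribed value in `[w, w + q]`. This interval reaches up to `h * n` as soon as
`w ≠ 0`, and it has at least `n` elements, so the largest multiple of `n` not exceeding `w + q` is
at least both `w` and `h * n`. Hence each of the `2 ^ p - 1` nonzero prefixes extends to a string
whose weight is some `j * n` with `j ≥ h`.
-/

open Finset

lemma sum_choose_le_choose_add {p q s : ℕ} {T : Finset ℕ} (hT : ∀ w ∈ T, s ∈ Icc w (w + q)) :
    ∑ w ∈ T, p.choose w ≤ (p + q).choose s := by
  have subset_range : T ⊆ range (s + 1) := fun w hw ↦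
    mem_range_succ_iff.2 (mem_Icc.1 (hT w hw)).1
  have suffix_pos : ∀ w ∈ T, 0 < q.choose (s - w) := fun w hw ↦
    Nat.choose_pos (Nat.sub_le_iff_le_add'.2 (mem_Icc.1 (hT w hw)).2)
  calc ∑ w ∈ T, p.choose w
      ≤ ∑ w ∈ T, p.choose w * q.choose (s - w) :=
        sum_le_sum fun w hw ↦ Nat.le_mul_of_pos_right _ (suffix_pos w hw)
    _ ≤ ∑ w ∈ range (s + 1), p.choose w * q.choose (s - w) :=
        sum_le_sum_of_subset subset_range
    _ = (p + q).choose s := by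
        rw [Nat.add_choose_eq, Nat.sum_antidiagonal_eq_sum_range_succ_mk]

lemma sum_choose_le_sum_choose_add {ι : Type*} {p q : ℕ} {T : Finset ℕ} {J : Finset ι} {s : ι → ℕ}
    (hT : ∀ w ∈ T, ∃ j ∈ J, s j ∈ Icc w (w + q)) :
    ∑ w ∈ T, p.choose w ≤ ∑ j ∈ J, (p + q).choose (s j) := by
  have one_le_card_reachable : ∀ w ∈ T, 1 ≤ #{j ∈ J | s j ∈ Icc w (w + q)} := fun w hw ↦
    card_pos.2 (filter_nonempty_iff.2 (hT w hw))
  calc ∑ w ∈ T, p.choose w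
      ≤ ∑ w ∈ T, ∑ j ∈ J with s j ∈ Icc w (w + q), p.choose w :=
        sum_le_sum fun w hw ↦ by
          rw [sum_const, smul_eq_mul]
          exact Nat.le_mul_of_pos_left _ (one_le_card_reachable w hw)
    _ = ∑ j ∈ J, ∑ w ∈ T with s j ∈ Icc w (w + q), p.choose w :=
        sum_comm' fun w j ↦ by simp only [mem_filter]; tauto
    _ ≤ ∑ j ∈ J, (p + q).choose (s j) :=
        sum_le_sum fun _ _ ↦ sum_choose_le_choose_add fun _ hw ↦ (mem_filter.1 hw).2

lemma sum_Icc_one_choose (p : ℕ) : ∑ w ∈ Icc 1 p, p.choose w = 2 ^ p - 1 := by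
  rw [← Nat.sum_range_choose, sum_range_succ', Nat.choose_zero_right, Nat.add_sub_cancel,
    range_eq_Ico, sum_Ico_add' (fun w ↦ p.choose w), zero_add, Ico_add_one_right_eq_Icc]

lemma exists_ge_mul_mem_Icc {n q h w : ℕ} (hn : 1 ≤ n) (hnq : n ≤ q + 1) (hw : h * n ≤ w + q) :
    ∃ j ≥ h, j * n ∈ Icc w (w + q) := by
  have lt_next_multiple : w + q < (w + q) / n * n + n := Nat.lt_div_mul_add hn
  exact ⟨(w + q) / n, (Nat.le_div_iff_mul_le hn).2 hw,
    mem_Icc.2 ⟨by omega, Nat.div_mul_le_self _ _⟩⟩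

theorem stmt1 (m h n : ℕ) (hh : 1 ≤ h) (hn : 1 ≤ n) :
    2 ^ (m + 1 - h * n) - 1 ≤ ∑ j ∈ Finset.Icc h m, m.choose (j * n) := by
  rcases Nat.lt_or_ge m (h * n) with hm | hm
  · simp [Nat.sub_eq_zero_of_le (Nat.succ_le_of_lt hm)]
  have n_le : n ≤ h * n := Nat.le_mul_of_pos_left n hh
  obtain ⟨q, hq⟩ : ∃ q, h * n = q + 1 := Nat.exists_eq_add_one.2 (hn.trans n_le)
  obtain ⟨p, rfl⟩ : ∃ p, m = p + q := Nat.exists_eq_add_of_le' (by omega)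
  have exists_target : ∀ w ∈ Icc 1 p, ∃ j ∈ Icc h (p + q), j * n ∈ Icc w (w + q) := by
    intro w hw
    obtain ⟨one_le_w, w_le⟩ := mem_Icc.1 hw
    obtain ⟨j, h_le, hj⟩ := exists_ge_mul_mem_Icc (h := h) (w := w) hn (hq ▸ n_le) (by omega)
    have j_le : j ≤ p + q :=
      (Nat.le_mul_of_pos_right j hn).trans ((mem_Icc.1 hj).2.trans (by omega))
    exact ⟨j, mem_Icc.2 ⟨h_le, j_le⟩, hj⟩
  calc 2 ^ (p + q + 1 - h * n) - 1
      = ∑ w ∈ Icc 1 p, p.choose w := by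
        rw [sum_Icc_one_choose, hq, Nat.add_assoc, Nat.add_sub_cancel]
    _ ≤ ∑ j ∈ Icc h (p + q), (p + q).choose (j * n) :=
        sum_choose_le_sum_choose_add exists_target
end

section
/- Let H₁ : Fin ℓ₁ → ℤ and H₂ : Fin ℓ₂ → ℤ be nonempty sequences of positive integers (all terms ≥ 1). If both H₁ and H₂ are 1-smooth, then the concatenated sequence H₁·H₂ (the function on Fin (ℓ₁ + ℓ₂) whose first ℓ₁ values are those of H₁ and whose remaining values are those of H₂) is 1-smooth. -/
/-- A nonempty sequence of positive integers is `1`-smooth if the set of sums of its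
nonempty subsequences equals the integer interval `[1, total sum]`. -/
def IsOneSmooth {ℓ : ℕ} (T : Fin ℓ → ℤ) : Prop :=
  {s : ℤ | ∃ S : Finset (Fin ℓ), S.Nonempty ∧ ∑ i ∈ S, T i = s} = Set.Icc 1 (∑ i, T i)

/-! Adjoining the empty subsequence turns `1`-smoothness into a statement about sumsets: a sequence
of positive integers `T` is `1`-smooth exactly when all its subset sums, including the empty sum
`0`, fill `[0, ∑ T]`. The subset sums of a concatenation form the Minkowski sum of the two sets of
subset sums, and `[0, a] + [0, b] = [0, a + b]`. -/

open Finset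
open scoped Pointwise

section SubsetSums

variable {ι κ M : Type*} [AddCommMonoid M]

/-- The set of sums of `f` over finite subsets of its index type. Unlike in the definition of
`1`-smoothness the empty subset is allowed, which makes concatenation correspond to the Minkowski
sum. -/
def subsetSums (f : ι → M) : Set M :=
  Set.range fun S : Finset ι ↦ ∑ i ∈ S, f i

lemma zero_mem_subsetSums (f : ι → M) : 0 ∈ subsetSums f :=
  ⟨∅, sum_empty⟩

lemma subsetSums_comp_equiv (e : ι ≃ κ) (f : κ → M) : subsetSums (f ∘ e) = subsetSums f := by
  simpa only [subsetSums, Function.comp_def, Equiv.finsetCongr_apply, sum_map,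
    Equiv.coe_toEmbedding] using
    e.finsetCongr.surjective.range_comp fun S : Finset κ ↦ ∑ i ∈ S, f i

lemma subsetSums_sumElim (f : ι → M) (g : κ → M) :
    subsetSums (Sum.elim f g) = subsetSums f + subsetSums g := by
  apply Set.Subset.antisymm
  · rintro _ ⟨U, rfl⟩
    exact ⟨_, ⟨U.toLeft, rfl⟩, _, ⟨U.toRight, rfl⟩,
      (sum_sum_eq_sum_toLeft_add_sum_toRight U (Sum.elim f g)).symm⟩
  · rintro _ ⟨_, ⟨S, rfl⟩, _, ⟨T, rfl⟩, rfl⟩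
    exact ⟨S.disjSum T, sum_sumElim S T f g⟩

lemma subsetSums_append {m n : ℕ} (f : Fin m → M) (g : Fin n → M) :
    subsetSums (Fin.append f g) = subsetSums f + subsetSums g := by
  have append_comp_equiv : Fin.append f g ∘ finSumFinEquiv = Sum.elim f g :=
    Fin.append_comp_sumElim
  rw [← subsetSums_comp_equiv finSumFinEquiv, append_comp_equiv, subsetSums_sumElim]

lemma setOf_nonempty_sum_eq_subsetSums_sdiff_zero [PartialOrder M] [IsOrderedCancelAddMonoid M]
    {f : ι → M} (hf : ∀ i, 0 < f i) :
    {s | ∃ S : Finset ι, S.Nonempty ∧ ∑ i ∈ S, f i = s} = subsetSums f \ {0} := by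
  ext s
  constructor
  · rintro ⟨S, hS, rfl⟩
    exact ⟨⟨S, rfl⟩, (sum_pos (fun i _ ↦ hf i) hS).ne'⟩
  · rintro ⟨⟨S, rfl⟩, hne⟩
    exact ⟨S, nonempty_of_sum_ne_zero hne, rfl⟩

end SubsetSums

lemma isOneSmooth_iff_subsetSums_eq_Icc {ℓ : ℕ} {T : Fin ℓ → ℤ} (hT : ∀ i, 0 < T i) :
    IsOneSmooth T ↔ subsetSums T = Set.Icc 0 (∑ i, T i) := by
  have total_nonneg : 0 ≤ ∑ i, T i := sum_nonneg fun i _ ↦ (hT i).le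
  have Icc_one_eq : Set.Icc 1 (∑ i, T i) = Set.Icc 0 (∑ i, T i) \ {0} := by
    rw [Set.Icc_sdiff_left, ← Set.Icc_add_one_left_eq_Ioc, zero_add]
  rw [IsOneSmooth, setOf_nonempty_sum_eq_subsetSums_sdiff_zero hT, Icc_one_eq]
  refine ⟨fun h ↦ ?_, fun h ↦ by rw [h]⟩
  rw [← Set.insert_sdiff_self_of_mem (zero_mem_subsetSums T), h,
    Set.insert_sdiff_self_of_mem (Set.left_mem_Icc.2 total_nonneg)]

theorem stmt3 {ℓ₁ ℓ₂ : ℕ} (h₁ : 1 ≤ ℓ₁) (h₂ : 1 ≤ ℓ₂)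
    (H₁ : Fin ℓ₁ → ℤ) (H₂ : Fin ℓ₂ → ℤ)
    (hpos₁ : ∀ i, 1 ≤ H₁ i) (hpos₂ : ∀ i, 1 ≤ H₂ i)
    (hsm₁ : IsOneSmooth H₁) (hsm₂ : IsOneSmooth H₂) :
    IsOneSmooth (Fin.append H₁ H₂) := by
  have pos₁ : ∀ i, 0 < H₁ i := hpos₁
  have pos₂ : ∀ i, 0 < H₂ i := hpos₂
  have append_pos : ∀ i, 0 < Fin.append H₁ H₂ i :=
    Fin.addCases (by simpa using pos₁) (by simpa using pos₂)
  have total_append : ∑ i, Fin.append H₁ H₂ i = ∑ i, H₁ i + ∑ i, H₂ i := by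
    simp [Fin.sum_univ_add]
  have total₁_nonneg : 0 ≤ ∑ i, H₁ i := sum_nonneg fun i _ ↦ (pos₁ i).le
  have total₂_nonneg : 0 ≤ ∑ i, H₂ i := sum_nonneg fun i _ ↦ (pos₂ i).le
  rw [isOneSmooth_iff_subsetSums_eq_Icc pos₁] at hsm₁
  rw [isOneSmooth_iff_subsetSums_eq_Icc pos₂] at hsm₂
  rw [isOneSmooth_iff_subsetSums_eq_Icc append_pos]
  calc subsetSums (Fin.append H₁ H₂)
    _ = subsetSums H₁ + subsetSums H₂ := subsetSums_append H₁ H₂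
    _ = Set.Icc 0 (∑ i, H₁ i) + Set.Icc 0 (∑ i, H₂ i) := by rw [hsm₁, hsm₂]
    _ = Set.Icc 0 (∑ i, Fin.append H₁ H₂ i) := by
      rw [Set.Icc_add_Icc total₁_nonneg total₂_nonneg, add_zero, total_append]
end

section
/- Let ℓ ≥ 2 and let H : Fin ℓ → ℤ be a sequence of positive integers (all terms ≥ 1). Let i₀ be an index attaining the least term, i.e., H i₀ ≤ H i for all i. If the restriction of H to the complement of {i₀} (a sequence of positive integers indexed by the ℓ − 1 remaining indices) is 1-smooth, then H itself is 1-smooth. -/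
/-! Let `M` be the sum over a `1`-smooth `I`. The sums of nonempty subsets of `insert i I` are those
avoiding `i`, which fill `[1, M]`, and those using `i`, which fill `[T i, T i + M]`. If
`1 ≤ T i ≤ M + 1`, these two intervals leave no gap and together fill `[1, T i + M]`. A least term
is at most any single other term, hence at most `M`. -/

/-- The restriction of a sequence of positive integers to a finite index set `I` is
`1`-smooth if the set of sums of its nonempty subsequences supported in `I` equals the
integer interval `[1, ∑ i ∈ I, T i]`. -/
def IsOneSmoothOn {ℓ : ℕ} (T : Fin ℓ → ℤ) (I : Finset (Fin ℓ)) : Prop :=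
  {s : ℤ | ∃ S ⊆ I, S.Nonempty ∧ ∑ i ∈ S, T i = s} = Set.Icc 1 (∑ i ∈ I, T i)

theorem exists_nonempty_subset_insert_sum_eq_iff {ι M : Type*} [DecidableEq ι] [AddCommMonoid M]
    {f : ι → M} {I : Finset ι} {i : ι} (hi : i ∉ I) {s : M} :
    (∃ S ⊆ insert i I, S.Nonempty ∧ ∑ j ∈ S, f j = s) ↔
      (∃ S ⊆ I, S.Nonempty ∧ ∑ j ∈ S, f j = s) ∨ ∃ S ⊆ I, f i + ∑ j ∈ S, f j = s := by
  constructor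
  · rintro ⟨S, hS, hne, hsum⟩
    by_cases hiS : i ∈ S
    · exact .inr ⟨S.erase i, Finset.subset_insert_iff.mp hS, by rwa [Finset.add_sum_erase S f hiS]⟩
    · exact .inl ⟨S, (Finset.subset_insert_iff_of_notMem hiS).mp hS, hne, hsum⟩
  · rintro (⟨S, hS, hne, hsum⟩ | ⟨S, hS, hsum⟩)
    · exact ⟨S, hS.trans (Finset.subset_insert i I), hne, hsum⟩
    · exact ⟨insert i S, Finset.insert_subset_insert i hS, Finset.insert_nonempty i S,
        by rwa [Finset.sum_insert fun h => hi (hS h)]⟩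

namespace IsOneSmoothOn

variable {ℓ : ℕ} {T : Fin ℓ → ℤ} {I : Finset (Fin ℓ)}

theorem exists_nonempty_subset_sum_eq_iff (hI : IsOneSmoothOn T I) {s : ℤ} :
    (∃ S ⊆ I, S.Nonempty ∧ ∑ i ∈ S, T i = s) ↔ s ∈ Set.Icc 1 (∑ i ∈ I, T i) :=
  Set.ext_iff.mp hI s

theorem sum_mem_Icc (hI : IsOneSmoothOn T I) {S : Finset (Fin ℓ)} (hS : S ⊆ I)
    (hne : S.Nonempty) : ∑ i ∈ S, T i ∈ Set.Icc 1 (∑ i ∈ I, T i) :=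
  hI.exists_nonempty_subset_sum_eq_iff.mp ⟨S, hS, hne, rfl⟩

theorem le_sum (hI : IsOneSmoothOn T I) {i : Fin ℓ} (hi : i ∈ I) : T i ≤ ∑ j ∈ I, T j := by
  simpa only [Finset.sum_singleton] using
    (hI.sum_mem_Icc (Finset.singleton_subset_iff.mpr hi) (Finset.singleton_nonempty i)).2

theorem sum_nonneg (hI : IsOneSmoothOn T I) : 0 ≤ ∑ i ∈ I, T i := by
  rcases I.eq_empty_or_nonempty with rfl | hne
  · exact Finset.sum_empty.ge
  · exact zero_le_one.trans (hI.sum_mem_Icc subset_rfl hne).1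

theorem exists_subset_sum_eq_iff (hI : IsOneSmoothOn T I) {s : ℤ} :
    (∃ S ⊆ I, ∑ i ∈ S, T i = s) ↔ s ∈ Set.Icc 0 (∑ i ∈ I, T i) := by
  constructor
  · rintro ⟨S, hS, rfl⟩
    rcases S.eq_empty_or_nonempty with rfl | hne
    · exact ⟨Finset.sum_empty.ge, Finset.sum_empty.trans_le hI.sum_nonneg⟩
    · exact ⟨zero_le_one.trans (hI.sum_mem_Icc hS hne).1, (hI.sum_mem_Icc hS hne).2⟩
  · rintro ⟨h0, hs⟩
    rcases h0.eq_or_lt with rfl | hpos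
    · exact ⟨∅, Finset.empty_subset I, Finset.sum_empty⟩
    · obtain ⟨S, hS, -, hsum⟩ := hI.exists_nonempty_subset_sum_eq_iff.mpr ⟨hpos, hs⟩
      exact ⟨S, hS, hsum⟩

end IsOneSmoothOn

theorem stmt4_general {ℓ : ℕ} {T : Fin ℓ → ℤ} {I : Finset (Fin ℓ)} {i : Fin ℓ} (hi : i ∉ I)
    (hpos : 1 ≤ T i) (hle : T i ≤ (∑ j ∈ I, T j) + 1) (hI : IsOneSmoothOn T I) :
    IsOneSmoothOn T (insert i I) := by
  ext s
  rw [Set.mem_ofPred_eq, exists_nonempty_subset_insert_sum_eq_iff hi, Finset.sum_insert hi,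
    hI.exists_nonempty_subset_sum_eq_iff]
  simp only [← eq_sub_iff_add_eq', hI.exists_subset_sum_eq_iff, Set.mem_Icc]
  omega

theorem stmt4 {ℓ : ℕ} (hℓ : 2 ≤ ℓ) (H : Fin ℓ → ℤ) (hpos : ∀ i, 1 ≤ H i)
    (i₀ : Fin ℓ) (hmin : ∀ i, H i₀ ≤ H i)
    (hsm : IsOneSmoothOn H ({i₀}ᶜ : Finset (Fin ℓ))) :
    IsOneSmoothOn H (Finset.univ : Finset (Fin ℓ)) := by
  obtain ⟨j, hj⟩ := @exists_ne _ (Fin.nontrivial_iff_two_le.mpr hℓ) i₀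
  have hle : H i₀ ≤ ∑ i ∈ {i₀}ᶜ, H i := (hmin j).trans (hsm.le_sum (by simpa using hj))
  simpa using stmt4_general (by simp) (hpos i₀) (Int.le_add_one hle) hsm
end

section
/- Let n ≥ 1 and let T : Fin ℓ → ℤ be a sequence of positive integers (all terms ≥ 1) with ℓ ≥ n such that T is not 1-smooth. Then there exists a nonempty subset K ⊆ Fin ℓ such that n divides ∑_{i∈K} T i, and ∑_{i∈K} T i ≥ 2·|K|, and |K| ≥ ℓ − (n − 1). -/
open Finset

variable {ι M N G : Type*}

section SubfamilySums

variable [AddCommMonoid M] [DecidableEq M] [AddCommMonoid N] [DecidableEq N]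

/-- The set of sums of `f` over the subsets of `S`, the empty sum included. Unlike
`Finset.subsetSum`, this is indexed, so that repeated terms count separately. -/
def subfamilySums (f : ι → M) (S : Finset ι) : Finset M :=
  S.powerset.image fun U => ∑ i ∈ U, f i

theorem mem_subfamilySums {f : ι → M} {S : Finset ι} {a : M} :
    a ∈ subfamilySums f S ↔ ∃ U ⊆ S, ∑ i ∈ U, f i = a := by
  simp [subfamilySums]

theorem zero_mem_subfamilySums (f : ι → M) (S : Finset ι) : 0 ∈ subfamilySums f S :=
  mem_subfamilySums.2 ⟨∅, empty_subset S, sum_empty⟩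

theorem subfamilySums_insert [DecidableEq ι] (f : ι → M) {S : Finset ι} {x : ι} (hx : x ∉ S) :
    subfamilySums f (insert x S) =
      subfamilySums f S ∪ (subfamilySums f S).image (f x + ·) := by
  rw [subfamilySums, powerset_insert, image_union, image_image, subfamilySums, image_image]
  congr 1
  exact image_congr fun U hU => sum_insert fun hxU => hx (mem_powerset.1 hU hxU)

theorem subfamilySums_map (φ : M →+ N) (f : ι → M) (S : Finset ι) :
    subfamilySums (fun i => φ (f i)) S = (subfamilySums f S).image φ := by
  simp only [subfamilySums, image_image, Function.comp_def, map_sum]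

end SubfamilySums

section ZeroSum

variable [AddCommGroup G]

section Growth

variable [DecidableEq ι] [DecidableEq G]

theorem card_subfamilySums_lt_card_subfamilySums_insert {f : ι → G} {S : Finset ι} {x : ι}
    (hx : x ∉ S) (hneg : -f x ∉ subfamilySums f S) :
    #(subfamilySums f S) < #(subfamilySums f (insert x S)) := by
  rw [subfamilySums_insert f hx]
  refine card_lt_card (subset_union_left.ssubset_of_ne fun hunion => hneg ?_)
  have htranslate : (subfamilySums f S).image (f x + ·) = subfamilySums f S :=
    eq_of_subset_of_card_le (union_eq_left.1 hunion.symm)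
      (card_image_of_injective _ (add_right_injective (f x))).ge
  obtain ⟨a, ha, hxa⟩ := mem_image.1 (htranslate.symm ▸ zero_mem_subfamilySums f S)
  rwa [neg_eq_of_add_eq_zero_right hxa]

theorem card_subfamilySums_add_card_le {f : ι → G} {S B : Finset ι} (hSB : Disjoint S B)
    (hzero : ∀ U ⊆ S ∪ B, ∑ i ∈ U, f i = 0 → U ⊆ S) :
    #(subfamilySums f S) + #B ≤ #(subfamilySums f (S ∪ B)) := by
  induction B using Finset.induction_on with
  | empty => simp
  | insert x B hxB ih =>
    rw [disjoint_insert_right] at hSB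
    rw [union_insert] at hzero ⊢
    have hx : x ∉ S ∪ B := notMem_union.2 ⟨hSB.1, hxB⟩
    have hneg : -f x ∉ subfamilySums f (S ∪ B) := fun hmem => by
      obtain ⟨U, hU, hsum⟩ := mem_subfamilySums.1 hmem
      have hzeroU : ∑ i ∈ insert x U, f i = 0 := by
        rw [sum_insert fun hxU => hx (hU hxU), hsum, add_neg_cancel]
      exact hSB.1 (hzero _ (insert_subset_insert x hU) hzeroU (mem_insert_self x U))
    have hgrow := card_subfamilySums_lt_card_subfamilySums_insert hx hneg
    have hih := ih hSB.2 fun U hU => hzero U (hU.trans (subset_insert x _))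
    rw [card_insert_of_notMem hxB]
    omega

theorem exists_sum_eq_zero_not_subset [Fintype G] {f : ι → G} {S A : Finset ι} (hSA : S ⊆ A)
    (hcard : Fintype.card G < #(subfamilySums f S) + #(A \ S)) :
    ∃ U ⊆ A, ∑ i ∈ U, f i = 0 ∧ ¬ U ⊆ S := by
  by_contra! hzero
  have hgrow := card_subfamilySums_add_card_le (f := f) (S := S) (B := A \ S) disjoint_sdiff
    (by rwa [union_sdiff_of_subset hSA])
  exact (hcard.trans_le hgrow).not_ge (card_le_univ _)

end Growth

variable [Fintype G]

theorem exists_nonempty_sum_eq_zero (f : ι → G) {A : Finset ι} (hA : Fintype.card G ≤ #A) :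
    ∃ U ⊆ A, U.Nonempty ∧ ∑ i ∈ U, f i = 0 := by
  classical
  have hcard : Fintype.card G < #(subfamilySums f ∅) + #(A \ ∅) := by
    simpa [subfamilySums, Nat.lt_one_add_iff] using hA
  obtain ⟨U, hUA, hU, hne⟩ := exists_sum_eq_zero_not_subset (empty_subset A) hcard
  exact ⟨U, hUA, nonempty_iff_ne_empty.2 fun h => hne h.subset, hU⟩

theorem exists_superset_sum_eq_zero [Fintype ι] {f : ι → G} {K : Finset ι}
    (hK : ∑ i ∈ K, f i = 0) :
    ∃ L, K ⊆ L ∧ ∑ i ∈ L, f i = 0 ∧ Fintype.card ι < #L + Fintype.card G := by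
  obtain ⟨L, hKL, hL⟩ := Finite.exists_le_maximal (p := fun L => ∑ i ∈ L, f i = 0) hK
  refine ⟨L, hKL, hL.prop, ?_⟩
  classical
  by_contra! hcard
  obtain ⟨U, hUL, ⟨x, hxU⟩, hU⟩ := exists_nonempty_sum_eq_zero f (A := Lᶜ)
    (by rw [card_compl]; omega)
  have hunion : ∑ i ∈ L ∪ U, f i = 0 := by
    rw [sum_union (disjoint_compl_right.mono_right hUL), hL.prop, hU, add_zero]
  exact mem_compl.1 (hUL hxU) (hL.le_of_ge hunion subset_union_left (mem_union_right L hxU))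

end ZeroSum

/-- The subfamily sums of `T` over `S` contain every integer from `0` to `∑ i ∈ S, T i`: the
analogue for index sets of `1`-smoothness, with the empty sum allowed so that `∅` qualifies. -/
def FillsInterval (T : ι → ℤ) (S : Finset ι) : Prop :=
  Icc 0 (∑ i ∈ S, T i) ⊆ subfamilySums T S

theorem fillsInterval_empty (T : ι → ℤ) : FillsInterval T ∅ := by
  simp [FillsInterval, subfamilySums]

theorem card_le_sum_of_one_le {T : ι → ℤ} {S : Finset ι} (hT : ∀ i ∈ S, 1 ≤ T i) :
    (#S : ℤ) ≤ ∑ i ∈ S, T i := by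
  simpa using card_nsmul_le_sum S T 1 hT

theorem two_mul_card_le_sum {T : ι → ℤ} {S K : Finset ι} (hS : ∀ i ∈ S, 1 ≤ T i)
    (hlarge : ∀ i ∉ S, (#S : ℤ) + 2 ≤ T i) (hK : ¬ K ⊆ S) :
    2 * (#K : ℤ) ≤ ∑ i ∈ K, T i := by
  classical
  have hinter : (#(K ∩ S) : ℤ) ≤ ∑ i ∈ K ∩ S, T i :=
    card_le_sum_of_one_le fun i hi => hS i (mem_inter.1 hi).2
  have hdiff : #(K \ S) * ((#S : ℤ) + 2) ≤ ∑ i ∈ K \ S, T i := by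
    simpa using card_nsmul_le_sum (K \ S) T _ fun i hi => hlarge i (mem_sdiff.1 hi).2
  have hone : (1 : ℤ) ≤ #(K \ S) := by exact_mod_cast (sdiff_nonempty.2 hK).card_pos
  have hle : (#(K ∩ S) : ℤ) ≤ #S := by exact_mod_cast card_le_card inter_subset_right
  have hcard : (#(K ∩ S) : ℤ) + #(K \ S) = #K := by exact_mod_cast card_inter_add_card_sdiff K S
  have hoffset : (#S : ℤ) ≤ #(K \ S) * #S := le_mul_of_one_le_left (Nat.cast_nonneg _) hone
  rw [← sum_inter_add_sum_sdiff K S T]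
  linarith

namespace FillsInterval

variable {T : ι → ℤ} {S : Finset ι}

protected theorem insert [DecidableEq ι] (hS : FillsInterval T S) {x : ι} (hx : x ∉ S)
    (hle : T x ≤ ∑ i ∈ S, T i + 1) : FillsInterval T (insert x S) := by
  intro m hm
  rw [sum_insert hx, mem_Icc] at hm
  rw [subfamilySums_insert T hx, mem_union]
  refine (le_or_gt m (∑ i ∈ S, T i)).imp (fun hmS => hS (mem_Icc.2 ⟨hm.1, hmS⟩)) fun hmS => ?_
  exact mem_image.2 ⟨m - T x, hS (mem_Icc.2 ⟨by omega, by omega⟩), by omega⟩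

theorem sum_add_two_le_of_maximal (hS : Maximal (FillsInterval T) S) {x : ι} (hx : x ∉ S) :
    ∑ i ∈ S, T i + 2 ≤ T x := by
  classical
  by_contra! hlt
  exact hx (hS.le_of_ge (hS.prop.insert hx (by omega)) (subset_insert x S) (mem_insert_self x S))

theorem min_le_card_subfamilySums_zmod (hS : FillsInterval T S) (hT : ∀ i ∈ S, 1 ≤ T i) (n : ℕ) :
    min n (#S + 1) ≤ #(subfamilySums (fun i => (T i : ZMod n)) S) := by
  have hmaps : Set.MapsTo (fun k : ℕ => (k : ZMod n)) (range (min n (#S + 1)))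
      (subfamilySums (fun i => (T i : ZMod n)) S) := fun k hk => by
    have hkS : (k : ℤ) ≤ ∑ i ∈ S, T i := by
      have hcard := card_le_sum_of_one_le hT
      have hk' := mem_range.1 (mem_coe.1 hk)
      omega
    refine mem_coe.2 ((subfamilySums_map (Int.castAddHom (ZMod n)) T S).symm ▸ ?_)
    exact mem_image.2 ⟨k, hS (mem_Icc.2 ⟨by omega, hkS⟩), Int.cast_natCast k⟩
  have hinj : Set.InjOn (fun k : ℕ => (k : ZMod n)) (range (min n (#S + 1))) :=
    (CharP.natCast_injOn_Iio (ZMod n) n).mono fun k hk =>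
      (mem_range.1 (mem_coe.1 hk)).trans_le (min_le_left _ _)
  simpa only [card_range] using card_le_card_of_injOn _ hmaps hinj

theorem isOneSmooth {ℓ : ℕ} {T : Fin ℓ → ℤ} (hT : FillsInterval T univ) (hpos : ∀ i, 1 ≤ T i) :
    IsOneSmooth T := by
  have hnonneg (i : Fin ℓ) : 0 ≤ T i := zero_le_one.trans (hpos i)
  ext m
  constructor
  · rintro ⟨S, ⟨x, hx⟩, rfl⟩
    exact ⟨(hpos x).trans (single_le_sum (fun i _ => hnonneg i) hx),
      sum_le_univ_sum_of_nonneg hnonneg⟩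
  · rintro ⟨hm, hmT⟩
    obtain ⟨U, -, rfl⟩ := mem_subfamilySums.1 (hT (mem_Icc.2 ⟨by omega, hmT⟩))
    exact ⟨U, nonempty_of_sum_ne_zero (f := T) (by omega), rfl⟩

theorem exists_sum_zmod_eq_zero_not_subset [Fintype ι] (hS : FillsInterval T S)
    (hT : ∀ i ∈ S, 1 ≤ T i) (hne : S ≠ univ) {n : ℕ} [NeZero n] (hn : n ≤ Fintype.card ι) :
    ∃ U : Finset ι, ∑ i ∈ U, (T i : ZMod n) = 0 ∧ ¬ U ⊆ S := by
  classical
  have hsums := hS.min_le_card_subfamilySums_zmod hT n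
  have hSlt := (card_lt_iff_ne_univ S).2 hne
  have hcard : Fintype.card (ZMod n) <
      #(subfamilySums (fun i => (T i : ZMod n)) S) + #(univ \ S) := by
    rw [ZMod.card, ← compl_eq_univ_sdiff, card_compl]
    omega
  obtain ⟨U, -, hU⟩ := exists_sum_eq_zero_not_subset (subset_univ S) hcard
  exact ⟨U, hU⟩

end FillsInterval

theorem stmt5 {n ℓ : ℕ} (hn : 1 ≤ n) (hℓ : n ≤ ℓ) (T : Fin ℓ → ℤ)
    (hpos : ∀ i, 1 ≤ T i) (hns : ¬ IsOneSmooth T) :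
    ∃ K : Finset (Fin ℓ), K.Nonempty ∧ (n : ℤ) ∣ ∑ i ∈ K, T i ∧
      2 * (K.card : ℤ) ≤ ∑ i ∈ K, T i ∧ ℓ - (n - 1) ≤ K.card := by
  have : NeZero n := ⟨by omega⟩
  obtain ⟨S, -, hS⟩ := Finite.exists_le_maximal (fillsInterval_empty T)
  have hne : S ≠ univ := fun h => hns ((h ▸ hS.prop).isOneSmooth hpos)
  have hlarge (i : Fin ℓ) (hi : i ∉ S) : (#S : ℤ) + 2 ≤ T i := by
    have hsum := FillsInterval.sum_add_two_le_of_maximal hS hi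
    have hcard := card_le_sum_of_one_le fun j (_ : j ∈ S) => hpos j
    omega
  obtain ⟨K₀, hK₀, hK₀S⟩ := hS.prop.exists_sum_zmod_eq_zero_not_subset (n := n)
    (fun i _ => hpos i) hne (by rwa [Fintype.card_fin])
  obtain ⟨K, hK₀K, hK, hcard⟩ := exists_superset_sum_eq_zero hK₀
  have hKS : ¬ K ⊆ S := fun h => hK₀S (hK₀K.trans h)
  rw [Fintype.card_fin, ZMod.card] at hcard
  refine ⟨K, nonempty_iff_ne_empty.2 fun h => hKS (h ▸ empty_subset S), ?_,
    two_mul_card_le_sum (fun i _ => hpos i) hlarge hKS, by omega⟩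
  rwa [← ZMod.intCast_zmod_eq_zero_iff_dvd, Int.cast_sum]
end

section
/- Let G be an additive abelian group, let T : Fin ℓ → G be a sequence, and let r be an integer with 1 ≤ r ≤ ℓ − 1. For a subset I ⊆ Fin ℓ and signs ε : Fin ℓ → ℤ with ε i ∈ {1, −1} for all i, write N(I, ε) for the number of subsets S ⊆ I (including the empty set) with ∑_{i∈S} ε i • T i = 0. Suppose m ≥ 2 is such that N(I, ε) ≥ m for every subset I of size r and every sign function ε. Then N(I, ε) ≥ 2·m for every subset I of size r + 1 and every sign function ε. -/
/-!
Flipping the signs on a zero-sum set `Z` turns the sum over `S` into the sum over `S ∆ Z`. So, for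
`x ∈ Z ⊆ I`, the map `S ↦ S ∆ Z` carries the subsets of `I \ {x}` that are zero-sum for the
flipped signs onto the zero-sum subsets of `I` that contain `x`. Together with the zero-sum
subsets of `I` that avoid `x`, these give the `2 * m` subsets. A suitable nonempty `Z` exists
because `m ≥ 2`.
-/

open scoped symmDiff

section ZeroSumSubsets

variable {ι G : Type*} [AddCommGroup G]

/-- The subsets of `I`, the empty one included, over which `f` sums to zero. The `ncard` of this
set is the number `N` of the sequence `f` restricted to `I`. -/
def zeroSumSubsets (f : ι → G) (I : Finset ι) : Set (Finset ι) :=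
  {S | S ⊆ I ∧ ∑ i ∈ S, f i = 0}

lemma zeroSumSubsets_mono (f : ι → G) {I J : Finset ι} (h : I ⊆ J) :
    zeroSumSubsets f I ⊆ zeroSumSubsets f J :=
  fun _ hS => ⟨hS.1.trans h, hS.2⟩

lemma zeroSumSubsets_finite (f : ι → G) (I : Finset ι) : (zeroSumSubsets f I).Finite :=
  I.powerset.finite_toSet.subset fun _ hS => Finset.mem_powerset.mpr hS.1

variable [DecidableEq ι]

lemma zeroSumSubsets_erase (f : ι → G) (I : Finset ι) (x : ι) :
    zeroSumSubsets f (I.erase x) = zeroSumSubsets f I \ {S | x ∈ S} := by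
  ext S
  simp only [zeroSumSubsets, Set.mem_sdiff, Set.mem_ofPred_eq, Finset.subset_erase, and_right_comm]

lemma sum_symmDiff_eq_sum_piecewise_neg_add (f : ι → G) (S Z : Finset ι) :
    ∑ i ∈ S ∆ Z, f i = ∑ i ∈ S, Z.piecewise (-f) f i + ∑ i ∈ Z, f i := by
  have hsymm : ∑ i ∈ S ∆ Z, f i = ∑ i ∈ S \ Z, f i + ∑ i ∈ Z \ S, f i :=
    Finset.sum_union disjoint_sdiff_sdiff
  rw [hsymm, Finset.sum_piecewise, ← Finset.sum_inter_add_sum_sdiff Z S f, Finset.inter_comm Z S]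
  simp only [Pi.neg_apply, Finset.sum_neg_distrib]
  abel

lemma symmDiff_mem_zeroSumSubsets_iff {f : ι → G} {I Z : Finset ι} (hZ : Z ∈ zeroSumSubsets f I)
    (S : Finset ι) :
    S ∆ Z ∈ zeroSumSubsets f I ↔ S ∈ zeroSumSubsets (Z.piecewise (-f) f) I := by
  have hsubset : S ∆ Z ⊆ I ↔ S ⊆ I := by
    refine ⟨fun h => ?_, fun h => symmDiff_le_sup.trans (sup_le h hZ.1)⟩
    rw [← symmDiff_symmDiff_cancel_right Z S]
    exact symmDiff_le_sup.trans (sup_le h hZ.1)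
  have hsum : ∑ i ∈ S ∆ Z, f i = ∑ i ∈ S, Z.piecewise (-f) f i := by
    rw [sum_symmDiff_eq_sum_piecewise_neg_add, hZ.2, add_zero]
  exact and_congr hsubset (by rw [hsum])

lemma ncard_zeroSumSubsets_erase_add {f : ι → G} {I Z : Finset ι}
    (hZ : Z ∈ zeroSumSubsets f I) {x : ι} (hx : x ∈ Z) :
    (zeroSumSubsets (Z.piecewise (-f) f) (I.erase x)).ncard +
      (zeroSumSubsets f (I.erase x)).ncard = (zeroSumSubsets f I).ncard := by
  have hpreimage : zeroSumSubsets (Z.piecewise (-f) f) (I.erase x) =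
      (· ∆ Z) ⁻¹' (zeroSumSubsets f I ∩ {S | x ∈ S}) := by
    ext S
    have hmem : x ∈ S ∆ Z ↔ x ∉ S := by simp [Finset.mem_symmDiff, hx]
    rw [zeroSumSubsets_erase]
    exact and_congr (symmDiff_mem_zeroSumSubsets_iff hZ S).symm hmem.symm
  have hrange : Set.range (· ∆ Z : Finset ι → Finset ι) = Set.univ :=
    (symmDiff_left_surjective Z).range_eq
  rw [hpreimage, Set.ncard_preimage_of_injective_subset_range (symmDiff_left_injective Z)
      (hrange ▸ Set.subset_univ _), zeroSumSubsets_erase,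
    Set.ncard_inter_add_ncard_sdiff_eq_ncard _ _ (zeroSumSubsets_finite f I)]

theorem two_mul_le_ncard_zeroSumSubsets {f : ι → G} {I : Finset ι} (hI : I.Nonempty) {m : ℕ}
    (hm : 2 ≤ m)
    (h : ∀ x ∈ I, ∀ Z : Finset ι, m ≤ (zeroSumSubsets (Z.piecewise (-f) f) (I.erase x)).ncard) :
    2 * m ≤ (zeroSumSubsets f I).ncard := by
  have hf (x : ι) (hx : x ∈ I) : m ≤ (zeroSumSubsets f (I.erase x)).ncard := by
    simpa only [Finset.piecewise_empty] using h x hx ∅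
  obtain ⟨y, hy⟩ := hI
  obtain ⟨Z, hZy, hZ_ne⟩ := Set.exists_ne_of_one_lt_ncard (hm.trans (hf y hy)) ∅
  obtain ⟨x, hxZ⟩ := Finset.nonempty_iff_ne_empty.mpr hZ_ne
  have hZ : Z ∈ zeroSumSubsets f I := zeroSumSubsets_mono f (I.erase_subset y) hZy
  have hxI : x ∈ I := hZ.1 hxZ
  calc 2 * m = m + m := two_mul m
    _ ≤ (zeroSumSubsets (Z.piecewise (-f) f) (I.erase x)).ncard +
        (zeroSumSubsets f (I.erase x)).ncard := add_le_add (h x hxI Z) (hf x hxI)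
    _ = (zeroSumSubsets f I).ncard := ncard_zeroSumSubsets_erase_add hZ hxZ

end ZeroSumSubsets

theorem stmt6_general {ι G : Type*} [AddCommGroup G] (T : ι → G) {r m : ℕ} (hm : 2 ≤ m)
    (hyp : ∀ (I : Finset ι) (ε : ι → ℤ), I.card = r → (∀ i, ε i = 1 ∨ ε i = -1) →
      m ≤ (zeroSumSubsets (fun i => ε i • T i) I).ncard)
    (I : Finset ι) (ε : ι → ℤ) (hI : I.card = r + 1) (hε : ∀ i, ε i = 1 ∨ ε i = -1) :
    2 * m ≤ (zeroSumSubsets (fun i => ε i • T i) I).ncard := by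
  classical
  refine two_mul_le_ncard_zeroSumSubsets (Finset.card_pos.mp (by lia)) hm fun x hx Z => ?_
  have hcard : (I.erase x).card = r := by rw [Finset.card_erase_of_mem hx, hI, Nat.add_sub_cancel]
  have hsign (i : ι) : Z.piecewise (-ε) ε i = 1 ∨ Z.piecewise (-ε) ε i = -1 := by
    by_cases hi : i ∈ Z
    · simpa [hi, neg_eq_iff_eq_neg] using (hε i).symm
    · simpa [hi] using hε i
  have hflip : (fun i => Z.piecewise (-ε) ε i • T i) =
      Z.piecewise (-fun i => ε i • T i) (fun i => ε i • T i) := by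
    ext i
    by_cases hi : i ∈ Z <;> simp [hi]
  exact hflip ▸ hyp (I.erase x) (Z.piecewise (-ε) ε) hcard hsign

theorem stmt6 {G : Type*} [AddCommGroup G] {ℓ : ℕ} (T : Fin ℓ → G)
    (r : ℕ) (hr1 : 1 ≤ r) (hrℓ : r + 1 ≤ ℓ) (m : ℕ) (hm : 2 ≤ m)
    (hyp : ∀ (I : Finset (Fin ℓ)) (ε : Fin ℓ → ℤ), I.card = r →
      (∀ i, ε i = 1 ∨ ε i = -1) →
      m ≤ Nat.card {S : Finset (Fin ℓ) // S ⊆ I ∧ ∑ i ∈ S, ε i • T i = 0}) :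
    ∀ (I : Finset (Fin ℓ)) (ε : Fin ℓ → ℤ), I.card = r + 1 →
      (∀ i, ε i = 1 ∨ ε i = -1) →
      2 * m ≤ Nat.card {S : Finset (Fin ℓ) // S ⊆ I ∧ ∑ i ∈ S, ε i • T i = 0} :=
  stmt6_general T hm hyp
end

section
/- Let ℓ ≥ 1 and let m : Fin ℓ → ℤ be a monotone (nondecreasing) sequence of positive integers, m 0 ≤ m 1 ≤ ⋯ ≤ m (ℓ−1) with all m i ≥ 1. Then m is 1-smooth if and only if m 0 = 1 and for every t with 1 ≤ t ≤ ℓ − 1 one has m t ≤ 1 + ∑_{i < t} m i. -/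
theorem sum_ne_of_sum_lt_of_forall_notMem_lt {ι M : Type*} [AddCommMonoid M] [PartialOrder M]
    [IsOrderedAddMonoid M] {m : ι → M} (hm : ∀ i, 0 ≤ m i) {A : Finset ι} {c : M}
    (hA : ∑ i ∈ A, m i < c) (hc : ∀ i ∉ A, c < m i) (S : Finset ι) : ∑ i ∈ S, m i ≠ c := by
  by_cases hSA : S ⊆ A
  · exact ((Finset.sum_le_sum_of_subset_of_nonneg hSA fun i _ _ ↦ hm i).trans_lt hA).ne
  · obtain ⟨i, hiS, hiA⟩ := Finset.not_subset.mp hSA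
    exact ((hc i hiA).trans_le (Finset.single_le_sum (fun j _ ↦ hm j) hiS)).ne'

theorem exists_subset_sum_eq_of_le_one_add_sum_lt {ι : Type*} [LinearOrder ι] {m : ι → ℤ}
    {s : Finset ι} (hs : ∀ t ∈ s, m t ≤ 1 + ∑ i ∈ s with i < t, m i) {v : ℤ}
    (hv₀ : 0 ≤ v) (hv : v ≤ ∑ i ∈ s, m i) : ∃ S ⊆ s, ∑ i ∈ S, m i = v := by
  induction s using Finset.induction_on_max generalizing v with
  | empty => exact ⟨∅, Finset.Subset.refl _, hv₀.antisymm hv⟩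
  | insert a s ha ih =>
    have ha_notMem : a ∉ s := fun h ↦ (ha a h).false
    have hs_le : ∀ t ∈ s, m t ≤ 1 + ∑ i ∈ s with i < t, m i := fun t ht ↦ by
      simpa only [Finset.filter_insert, if_neg (ha t ht).not_gt]
        using hs t (Finset.mem_insert_of_mem ht)
    have ha_le : m a ≤ 1 + ∑ i ∈ s, m i := by
      simpa only [Finset.filter_insert, lt_irrefl, if_false, Finset.filter_true_of_mem ha]
        using hs a (Finset.mem_insert_self a s)
    rw [Finset.sum_insert ha_notMem] at hv
    rcases le_or_gt v (∑ i ∈ s, m i) with hvs | hvs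
    · obtain ⟨S, hS, hsum⟩ := ih hs_le hv₀ hvs
      exact ⟨S, hS.trans (Finset.subset_insert a s), hsum⟩
    · obtain ⟨S, hS, hsum⟩ := ih hs_le (v := v - m a) (by omega) (by omega)
      refine ⟨insert a S, Finset.insert_subset_insert a hS, ?_⟩
      rw [Finset.sum_insert fun h ↦ ha_notMem (hS h), hsum, add_sub_cancel]

section

variable {ℓ : ℕ} {m : Fin ℓ → ℤ}

theorem IsOneSmooth.one_le (h : IsOneSmooth m) (i : Fin ℓ) : 1 ≤ m i :=
  (h.subset ⟨{i}, Finset.singleton_nonempty i, Finset.sum_singleton m i⟩).1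

theorem IsOneSmooth.le_one_add_sum_Iio (h : IsOneSmooth m) (hmono : Monotone m) (t : Fin ℓ) :
    m t ≤ 1 + ∑ i ∈ Finset.Iio t, m i := by
  have hnonneg : ∀ i, 0 ≤ m i := fun i ↦ zero_le_one.trans (h.one_le i)
  by_contra! hlt
  have hle_total : 1 + ∑ i ∈ Finset.Iio t, m i ≤ ∑ i, m i :=
    hlt.le.trans (Finset.single_le_sum (fun i _ ↦ hnonneg i) (Finset.mem_univ t))
  obtain ⟨S, -, hS⟩ := h.superset
    ⟨le_add_of_nonneg_right (Finset.sum_nonneg fun i _ ↦ hnonneg i), hle_total⟩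
  refine sum_ne_of_sum_lt_of_forall_notMem_lt hnonneg (lt_one_add _) (fun i hi ↦ ?_) S hS
  exact hlt.trans_le (hmono (not_lt.mp fun hit ↦ hi (Finset.mem_Iio.mpr hit)))

theorem isOneSmooth_of_le_one_add_sum_Iio (hpos : ∀ i, 1 ≤ m i)
    (h : ∀ t, m t ≤ 1 + ∑ i ∈ Finset.Iio t, m i) : IsOneSmooth m := by
  have hnonneg : ∀ i, 0 ≤ m i := fun i ↦ zero_le_one.trans (hpos i)
  apply Set.Subset.antisymm
  · rintro _ ⟨S, ⟨i, hi⟩, rfl⟩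
    exact ⟨(hpos i).trans (Finset.single_le_sum (fun j _ ↦ hnonneg j) hi),
      Finset.sum_le_univ_sum_of_nonneg hnonneg⟩
  · rintro v ⟨hv₁, hv⟩
    obtain ⟨S, -, rfl⟩ := exists_subset_sum_eq_of_le_one_add_sum_lt
      (fun t _ ↦ by simpa only [Finset.filter_gt_eq_Iio] using h t) (zero_le_one.trans hv₁) hv
    exact ⟨S, Finset.nonempty_of_sum_ne_zero (zero_lt_one.trans_le hv₁).ne', rfl⟩

theorem isOneSmooth_iff_le_one_add_sum_Iio (hmono : Monotone m) (hpos : ∀ i, 1 ≤ m i) :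
    IsOneSmooth m ↔ ∀ t, m t ≤ 1 + ∑ i ∈ Finset.Iio t, m i :=
  ⟨fun h ↦ h.le_one_add_sum_Iio hmono, isOneSmooth_of_le_one_add_sum_Iio hpos⟩

end

theorem stmt11 {ℓ : ℕ} (hℓ : 1 ≤ ℓ) (m : Fin ℓ → ℤ) (hmono : Monotone m)
    (hpos : ∀ i, 1 ≤ m i) :
    IsOneSmooth m ↔
      (m ⟨0, hℓ⟩ = 1 ∧
        ∀ t : Fin ℓ, 1 ≤ (t : ℕ) → m t ≤ 1 + ∑ i ∈ Finset.Iio t, m i) := by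
  have hsum_zero : ∑ i ∈ Finset.Iio (⟨0, hℓ⟩ : Fin ℓ), m i = 0 :=
    Finset.sum_eq_zero fun i hi ↦ absurd (Finset.mem_Iio.mp hi) (Nat.not_lt_zero i)
  rw [isOneSmooth_iff_le_one_add_sum_Iio hmono hpos]
  constructor
  · intro h
    have hle_one : m ⟨0, hℓ⟩ ≤ 1 := by simpa only [hsum_zero, add_zero] using h ⟨0, hℓ⟩
    exact ⟨hle_one.antisymm (hpos _), fun t _ ↦ h t⟩
  · rintro ⟨hzero, hle⟩ t
    rcases Nat.eq_zero_or_pos t with ht | ht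
    · obtain rfl : t = ⟨0, hℓ⟩ := Fin.ext ht
      rw [hzero, hsum_zero, add_zero]
    · exact hle t ht
end

section
/- Let n ≥ 11 be odd and let x ∈ ZMod n have additive order n. Define the sequence L : Fin ((n−1)/2) → ZMod n consisting of (n−5)/2 terms equal to 2 • x and 2 terms equal to 3 • x. Then L is zero-sum free, and for every g ∈ ZMod n of additive order n, L is not signed g-smooth. -/
/-- A sequence over `ZMod n` is zero-sum free if no nonempty subsequence sums to `0`. -/
def ZeroSumFree {n ℓ : ℕ} (T : Fin ℓ → ZMod n) : Prop :=
  ∀ S : Finset (Fin ℓ), S.Nonempty → ∑ i ∈ S, T i ≠ 0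

/-- A sequence over `ZMod n` is `g`-smooth if its terms are `mᵢ • g` for positive
integers `mᵢ` with `∑ mᵢ < n` such that the integer sequence `(mᵢ)` is `1`-smooth. -/
def IsGSmooth {n ℓ : ℕ} (g : ZMod n) (T : Fin ℓ → ZMod n) : Prop :=
  ∃ m : Fin ℓ → ℤ, (∀ i, 1 ≤ m i) ∧ (∀ i, T i = m i • g) ∧
    (∑ i, m i) < (n : ℤ) ∧ IsOneSmooth m

/-- A sequence over `ZMod n` is signed `g`-smooth if after multiplying each term by a
sign `±1` it becomes `g`-smooth. -/
def IsSignedGSmooth {n ℓ : ℕ} (g : ZMod n) (T : Fin ℓ → ZMod n) : Prop :=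
  ∃ ε : Fin ℓ → ℤ, (∀ i, ε i = 1 ∨ ε i = -1) ∧ IsGSmooth g (fun i => ε i • T i)

/-!
Let `L` consist of `k` terms `p • x` and `l` terms `q • x` with `p`, `q` coprime, `q ≤ k`, `p ≤ l`,
and let the order `n` of `x` satisfy `N - min p q < n < N`, where `N = k p + l q` is the total
weight.

A zero-sum subsequence has weight divisible by `n`. A proper subsequence omits a weight `p` or `q`,
so its weight is smaller than `n`, and `N` itself lies strictly between `n` and `2 n`.

A signed `g`-smooth representation writes `Lᵢ = sᵢ • g` with `∑ |sᵢ| < n`. Equal terms then have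
equal coefficients, because `|sᵢ - sⱼ| < n`; call the two coefficients `a` and `b`. As `q (p x) =
p (q x)`, `n` divides `q a - p b`, while `|q a - p b| ≤ k |a| + l |b| < n`. So `q a = p b`, hence
`a = p u` and `b = q u` with `u ≠ 0`, and `k |a| + l |b| = N |u| ≥ N > n`, a contradiction.
-/

lemma sum_ite_val_lt {M : Type*} [AddCommMonoid M] (k l : ℕ) (a b : M) :
    ∑ i : Fin (k + l), (if (i : ℕ) < k then a else b) = k • a + l • b := by
  simp [Fin.sum_univ_add]

lemma exists_eq_mul_of_mul_eq_mul {R : Type*} [CommRing R] {p q a b : R} (hpq : IsCoprime p q)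
    (h : q * a = p * b) : ∃ u, a = p * u ∧ b = q * u := by
  obtain ⟨c, d, hcd⟩ := hpq
  exact ⟨c * a + d * b, by linear_combination (-a) * hcd + d * h,
    by linear_combination (-b) * hcd - c * h⟩

lemma mem_of_zsmul_mem_of_isCoprime {G : Type*} [AddGroup G] {H : AddSubgroup G} {p q : ℤ}
    (hpq : IsCoprime p q) {x : G} (hp : p • x ∈ H) (hq : q • x ∈ H) : x ∈ H := by
  obtain ⟨c, d, hcd⟩ := hpq
  have hx : x = c • p • x + d • q • x := by
    rw [← mul_zsmul, ← mul_zsmul, ← add_zsmul, hcd, one_zsmul]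
  rw [hx]
  exact H.add_mem (H.zsmul_mem hp c) (H.zsmul_mem hq d)

lemma addOrderOf_dvd_sub_of_zsmul_eq_zsmul {G : Type*} [AddGroup G] {x g : G}
    (hx : x ∈ AddSubgroup.zmultiples g) {a b : ℤ} (h : a • g = b • g) :
    (addOrderOf x : ℤ) ∣ a - b :=
  (Int.natCast_dvd_natCast.mpr (addOrderOf_dvd_of_mem_zmultiples hx)).trans
    (addOrderOf_dvd_sub_iff_zsmul_eq_zsmul.mpr h)

lemma eq_of_dvd_sub_of_sum_abs_lt {ι : Type*} [Fintype ι] {s : ι → ℤ} {n : ℤ}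
    (hs : ∑ i, |s i| < n) {i j : ι} (h : n ∣ s i - s j) : s i = s j := by
  rcases eq_or_ne i j with rfl | hij
  · rfl
  have hlt : |s i - s j| < n := calc
    |s i - s j| ≤ |s i| + |s j| := abs_sub _ _
    _ ≤ ∑ i, |s i| :=
      Finset.add_le_sum (fun t _ => abs_nonneg (s t)) (Finset.mem_univ i) (Finset.mem_univ j) hij
    _ < n := hs
  exact sub_eq_zero.mp (Int.eq_zero_of_abs_lt_dvd h hlt)

lemma le_mul_abs_add_mul_abs_of_dvd {n k l p q a b : ℤ} (hpq : IsCoprime p q) (hp : 0 ≤ p)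
    (hq : 0 ≤ q) (hk : q ≤ k) (hl : p ≤ l) (hn : n ≤ k * p + l * q) (hab : a ≠ 0 ∨ b ≠ 0)
    (hdvd : n ∣ q * a - p * b) : n ≤ k * |a| + l * |b| := by
  by_contra! hlt
  have habs : |q * a - p * b| < n := calc
    |q * a - p * b| ≤ |q * a| + |p * b| := abs_sub _ _
    _ = q * |a| + p * |b| := by rw [abs_mul, abs_mul, abs_of_nonneg hp, abs_of_nonneg hq]
    _ ≤ k * |a| + l * |b| := by gcongr
    _ < n := hlt
  obtain ⟨u, rfl, rfl⟩ := exists_eq_mul_of_mul_eq_mul hpq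
    (sub_eq_zero.mp (Int.eq_zero_of_abs_lt_dvd hdvd habs))
  have hu : 1 ≤ |u| := Int.one_le_abs (by rintro rfl; simp at hab)
  have hN : 0 ≤ k * p + l * q :=
    add_nonneg (mul_nonneg (hq.trans hk) hp) (mul_nonneg (hp.trans hl) hq)
  refine hlt.not_ge (hn.trans ?_)
  calc k * p + l * q ≤ (k * p + l * q) * |u| := le_mul_of_one_le_right hN hu
    _ = k * |p * u| + l * |q * u| := by
      rw [abs_mul, abs_mul, abs_of_nonneg hp, abs_of_nonneg hq]; ring

lemma addOrderOf_le_sum_abs_of_ite_eq_zsmul {G : Type*} [AddCommGroup G] {x g : G} {k l p q : ℕ}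
    (hpq : p.Coprime q) (hp : 0 < p) (hq : 0 < q) (hk : q ≤ k) (hl : p ≤ l)
    (hx : addOrderOf x ≤ k * p + l * q) (hx0 : x ≠ 0) {s : Fin (k + l) → ℤ}
    (hs : ∀ i : Fin (k + l), (if (i : ℕ) < k then p • x else q • x) = s i • g) :
    (addOrderOf x : ℤ) ≤ ∑ i, |s i| := by
  by_contra! hlt
  have hcop : IsCoprime (p : ℤ) q := hpq.isCoprime
  let i₀ : Fin (k + l) := ⟨0, by omega⟩
  let j₀ : Fin (k + l) := ⟨k, by omega⟩
  have hi₀ : (p : ℤ) • x = s i₀ • g := by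
    rw [natCast_zsmul, ← hs, if_pos (hq.trans_le hk)]
  have hj₀ : (q : ℤ) • x = s j₀ • g := by
    rw [natCast_zsmul, ← hs, if_neg (lt_irrefl k)]
  have hxg : x ∈ AddSubgroup.zmultiples g :=
    mem_of_zsmul_mem_of_isCoprime hcop ⟨s i₀, hi₀.symm⟩ ⟨s j₀, hj₀.symm⟩
  have hcoeff : ∀ {i j}, s i • g = s j • g → s i = s j := fun h =>
    eq_of_dvd_sub_of_sum_abs_lt hlt (addOrderOf_dvd_sub_of_zsmul_eq_zsmul hxg h)
  have hval : ∀ i, s i = if (i : ℕ) < k then s i₀ else s j₀ := fun i => by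
    split_ifs with hi
    · exact hcoeff (by rw [← hi₀, ← hs, if_pos hi, natCast_zsmul])
    · exact hcoeff (by rw [← hj₀, ← hs, if_neg hi, natCast_zsmul])
  have hsum : ∑ i, |s i| = k * |s i₀| + l * |s j₀| := by
    rw [Finset.sum_congr rfl fun i _ => congrArg abs (hval i)]
    simp only [apply_ite abs, sum_ite_val_lt, nsmul_eq_mul]
  have hne : s i₀ ≠ 0 ∨ s j₀ ≠ 0 := by
    by_contra! h
    refine hx0 (AddSubgroup.mem_bot.mp (mem_of_zsmul_mem_of_isCoprime hcop ?_ ?_))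
    · rw [hi₀, h.1, zero_smul, AddSubgroup.mem_bot]
    · rw [hj₀, h.2, zero_smul, AddSubgroup.mem_bot]
  have hdvd : (addOrderOf x : ℤ) ∣ q * s i₀ - p * s j₀ :=
    addOrderOf_dvd_sub_of_zsmul_eq_zsmul hxg (by
      rw [mul_smul, mul_smul, ← hi₀, ← hj₀, smul_comm])
  rw [hsum] at hlt
  exact hlt.not_ge <| le_mul_abs_add_mul_abs_of_dvd hcop (by omega) (by omega) (by omega)
    (by omega) (by exact_mod_cast hx) hne hdvd

lemma zeroSumFree_nsmul {n ℓ : ℕ} {x : ZMod n} {w : Fin ℓ → ℕ} (hpos : ∀ i, 0 < w i)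
    (hlt : ∀ i, ∑ j, w j < addOrderOf x + w i) (hdvd : ¬ addOrderOf x ∣ ∑ j, w j) :
    ZeroSumFree fun i => w i • x := by
  intro S hS hzero
  have hdvdS : addOrderOf x ∣ ∑ i ∈ S, w i := by
    rwa [addOrderOf_dvd_iff_nsmul_eq_zero, Finset.sum_smul]
  have hle : addOrderOf x ≤ ∑ i ∈ S, w i :=
    Nat.le_of_dvd (Finset.sum_pos (fun i _ => hpos i) hS) hdvdS
  obtain ⟨i, hi⟩ : ∃ i, i ∉ S := by
    by_contra! hall
    exact hdvd (Finset.eq_univ_iff_forall.mpr hall ▸ hdvdS)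
  have hins : w i + ∑ j ∈ S, w j ≤ ∑ j, w j := by
    rw [← Finset.sum_insert hi]
    exact Finset.sum_le_sum_of_subset (Finset.subset_univ _)
  have := hlt i
  omega

lemma IsSignedGSmooth.exists_sum_abs_lt {n ℓ : ℕ} {g : ZMod n} {T : Fin ℓ → ZMod n}
    (h : IsSignedGSmooth g T) : ∃ s : Fin ℓ → ℤ, (∀ i, T i = s i • g) ∧ ∑ i, |s i| < n := by
  obtain ⟨ε, hε, m, hm, hT, hsum, -⟩ := h
  refine ⟨fun i => ε i * m i, fun i => ?_, ?_⟩
  · have hsq : ε i * ε i = 1 := by rcases hε i with h | h <;> rw [h] <;> rfl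
    rw [mul_smul, ← hT, smul_smul, hsq, one_smul]
  · have habs : ∀ i, |ε i * m i| = m i := fun i => by
      rw [abs_mul, abs_of_pos (zero_lt_one.trans_le (hm i))]
      rcases hε i with h | h <;> simp [h]
    simpa only [habs] using hsum

theorem stmt14_general {n k l ℓ p q : ℕ} (hℓ : ℓ = k + l) (hpq : p.Coprime q) (hk : q ≤ k)
    (hl : p ≤ l) (hn : n < k * p + l * q) (hnp : k * p + l * q < n + p)
    (hnq : k * p + l * q < n + q) {x : ZMod n} (hx : addOrderOf x = n) {L : Fin ℓ → ZMod n}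
    (hL : ∀ i, L i = if (i : ℕ) < k then p • x else q • x) :
    ZeroSumFree L ∧
      ∀ (g : ZMod n) (s : Fin ℓ → ℤ), (∀ i, L i = s i • g) → (n : ℤ) ≤ ∑ i, |s i| := by
  subst hℓ
  have hp : 0 < p := by omega
  have hq : 0 < q := by omega
  have hqn : q < n := by
    have := Nat.le_mul_of_pos_left p (hq.trans_le hk)
    have := Nat.le_mul_of_pos_left q (hp.trans_le hl)
    omega
  constructor
  · have hLw : L = fun i : Fin (k + l) => (if (i : ℕ) < k then p else q) • x := by
      funext i; rw [hL, ite_smul]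
    have hdvd : ¬ n ∣ k * p + l * q := fun h => by
      have := Nat.le_of_dvd (by omega) (Nat.dvd_sub h dvd_rfl)
      omega
    rw [hLw]
    apply zeroSumFree_nsmul
    · intro i; split_ifs <;> assumption
    · intro i
      rw [sum_ite_val_lt, hx]
      split_ifs <;> assumption
    · rwa [sum_ite_val_lt, hx]
  · intro g s hs
    have hx0 : x ≠ 0 := by
      rintro rfl
      rw [addOrderOf_zero] at hx
      omega
    rw [← hx]
    exact addOrderOf_le_sum_abs_of_ite_eq_zsmul hpq hp hq hk hl (by omega) hx0
      fun i => (hL i).symm.trans (hs i)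

theorem stmt14 (n : ℕ) (hn : 11 ≤ n) (hodd : Odd n) (x : ZMod n)
    (hx : addOrderOf x = n) (L : Fin ((n - 1) / 2) → ZMod n)
    (hL : ∀ i : Fin ((n - 1) / 2), L i = if (i : ℕ) < (n - 5) / 2 then 2 • x else 3 • x) :
    ZeroSumFree L ∧ ∀ g : ZMod n, addOrderOf g = n → ¬ IsSignedGSmooth g L := by
  obtain ⟨r, rfl⟩ := hodd
  obtain ⟨hfree, hle⟩ := stmt14_general (k := (2 * r + 1 - 5) / 2) (l := 2) (p := 2) (q := 3)
    (by omega) (by norm_num) (by omega) le_rfl (by omega) (by omega) (by omega) hx hL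
  exact ⟨hfree, fun g _ hg =>
    let ⟨s, hs, hlt⟩ := hg.exists_sum_abs_lt
    hlt.not_ge (hle g s hs)⟩
end

section
/- Let k > n ≥ 1 and let T : Fin ℓ → ℤ satisfy 1 ≤ T i ≤ k + n − 1 for every i, with ℓ ≥ ⌊((⌈k/n⌉ + 1)·n)/2⌋. Suppose T is idempotent-sum free, i.e., there is no nonempty subset S ⊆ Fin ℓ with n ∣ ∑_{i∈S} T i and ∑_{i∈S} T i ≥ ⌈k/n⌉·n. Then T is 1-smooth (the set of sums of nonempty subsets of Fin ℓ equals the integer interval [1, ∑_i T i]) and ∑_i T i ≤ ⌈k/n⌉·n − 1. -/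
/-!
Write `m = ⌈k/n⌉`. By the pigeonhole principle on partial sums, any `n` integers contain a nonempty
subfamily with sum divisible by `n`. Collecting such subfamilies greedily yields a set `S` of
indices whose sum is divisible by `n` and outside which fewer than `n` indices remain.
Idempotent-sum freeness gives `∑_S T ≤ (m - 1) * n`, so the lower bound on `ℓ` makes
`∑_S T < 2 * |S|`. Positive integers whose sum is less than twice their number attain every value up
to that sum, so a suitable part of `S` can be deleted from `T` to round `∑ T` down to a multiple
of `n`. By idempotent-sum freeness this multiple is below `m * n`, hence so is `∑ T`. But then
`∑ T < 2 * ℓ`, so `T` itself attains every value up to `∑ T`.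
-/

open Finset

section ZeroSum

variable {ι G : Type*}

lemma exists_infix_sum_map_eq_zero [AddGroup G] [Finite G] (f : ι → G) (l : List ι)
    (hl : Nat.card G ≤ l.length) : ∃ u, u <:+: l ∧ u ≠ [] ∧ (u.map f).sum = 0 := by
  have := Fintype.ofFinite G
  let partialSum (i : Fin (l.length + 1)) : G := ((l.take i).map f).sum
  obtain ⟨i, j, hne, heq⟩ := Fintype.exists_ne_map_eq_of_card_lt partialSum
    (by rw [Fintype.card_fin, ← Nat.card_eq_fintype_card]; omega)
  wlog hij : i < j generalizing i j
  · exact this j i hne.symm heq.symm (hne.lt_or_gt.resolve_left hij)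
  refine ⟨(l.take j).drop i, (List.drop_suffix _ _).isInfix.trans (List.take_prefix _ _).isInfix,
    List.ne_nil_of_length_pos ?_, ?_⟩
  · rw [List.length_drop, List.length_take]
    omega
  · have hsplit : partialSum i + (((l.take j).drop i).map f).sum = partialSum j := by
      rw [← List.sum_append, ← List.map_append, ← min_eq_left (Fin.le_def.mp hij.le),
        ← List.take_take, min_eq_left (Fin.le_def.mp hij.le), List.take_append_drop]
    rwa [← heq, add_eq_left] at hsplit

variable [AddCommGroup G] [Finite G]

lemma exists_nonempty_subset_sum_eq_zero (f : ι → G) {s : Finset ι} (hs : Nat.card G ≤ #s) :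
    ∃ t ⊆ s, t.Nonempty ∧ ∑ i ∈ t, f i = 0 := by
  classical
  obtain ⟨u, hus, hu, hsum⟩ := exists_infix_sum_map_eq_zero f s.toList (by rwa [length_toList])
  refine ⟨u.toFinset, fun i hi => mem_toList.mp (hus.subset (List.mem_toFinset.mp hi)),
    (List.toFinset_nonempty_iff u).mpr hu, ?_⟩
  rwa [List.sum_toFinset f (hus.sublist.nodup s.nodup_toList)]

lemma exists_subset_sum_eq_zero_card_sdiff_lt [DecidableEq ι] (f : ι → G) (s : Finset ι) :
    ∃ t ⊆ s, ∑ i ∈ t, f i = 0 ∧ #(s \ t) < Nat.card G := by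
  induction s using Finset.strongInduction with
  | _ s ih =>
    rcases lt_or_ge #s (Nat.card G) with hlt | hge
    · exact ⟨∅, s.empty_subset, sum_empty, by rwa [sdiff_empty]⟩
    · obtain ⟨u, hus, hu, hu0⟩ := exists_nonempty_subset_sum_eq_zero f hge
      obtain ⟨t, hts, ht0, hcard⟩ := ih (s \ u) (sdiff_ssubset hus hu)
      have hdisj : Disjoint u t := disjoint_sdiff.mono_right hts
      refine ⟨u ∪ t, union_subset hus (hts.trans sdiff_subset), ?_, ?_⟩
      · rw [sum_union hdisj, hu0, ht0, add_zero]
      · rwa [sdiff_sdiff_left, sup_eq_union] at hcard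

lemma exists_subset_dvd_sum_card_sdiff_lt [DecidableEq ι] {n : ℕ} (hn : 0 < n) (f : ι → ℤ)
    (s : Finset ι) : ∃ t ⊆ s, (n : ℤ) ∣ ∑ i ∈ t, f i ∧ #(s \ t) < n := by
  have : NeZero n := ⟨hn.ne'⟩
  obtain ⟨t, hts, ht0, hcard⟩ :=
    exists_subset_sum_eq_zero_card_sdiff_lt (fun i => (f i : ZMod n)) s
  refine ⟨t, hts, ?_, by rwa [Nat.card_zmod] at hcard⟩
  rwa [← ZMod.intCast_zmod_eq_zero_iff_dvd, Int.cast_sum]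

end ZeroSum

/-- The notion of `1`-smoothness for the terms of `f` indexed by `s`. The empty sum is admitted, so
that the notion applies to `s = ∅` and can be proved by induction on `s`. -/
def AttainsAllSums {ι : Type*} (f : ι → ℤ) (s : Finset ι) : Prop :=
  ∀ c, 0 ≤ c → c ≤ ∑ i ∈ s, f i → ∃ t ⊆ s, ∑ i ∈ t, f i = c

namespace AttainsAllSums

variable {ι : Type*} {f : ι → ℤ} {s : Finset ι}

protected lemma empty (f : ι → ℤ) : AttainsAllSums f ∅ :=
  fun _ h0 hc => ⟨∅, Subset.rfl, h0.antisymm hc⟩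

protected lemma insert [DecidableEq ι] (hs : AttainsAllSums f s) {a : ι} (ha : a ∉ s)
    (hfa : f a ≤ ∑ i ∈ s, f i + 1) : AttainsAllSums f (insert a s) := by
  intro c h0 hc
  rw [sum_insert ha] at hc
  rcases le_or_gt c (∑ i ∈ s, f i) with hle | hgt
  · obtain ⟨t, hts, ht⟩ := hs c h0 hle
    exact ⟨t, hts.trans (subset_insert a s), ht⟩
  · obtain ⟨t, hts, ht⟩ := hs (c - f a) (by omega) (by omega)
    refine ⟨insert a t, insert_subset_insert a hts, ?_⟩
    rw [sum_insert (fun hat => ha (hts hat)), ht, add_sub_cancel]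

lemma of_sum_lt_two_mul_card (hf : ∀ i ∈ s, 0 < f i) (hs : ∑ i ∈ s, f i < 2 * #s) :
    AttainsAllSums f s := by
  classical
  induction s using Finset.induction_on_max_value f with
  | empty => exact .empty f
  | insert a s ha hmax ih =>
    rw [sum_insert ha, card_insert_of_notMem ha] at hs
    have hfs : ∀ i ∈ s, 0 < f i := fun i hi => hf i (mem_insert_of_mem hi)
    rcases s.eq_empty_or_nonempty with rfl | hne
    · have hfa : f a < 2 := by simpa using hs
      exact (AttainsAllSums.empty f).insert ha (by rw [sum_empty]; omega)
    · have hcard : (#s : ℤ) ≤ ∑ i ∈ s, f i := by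
        simpa using card_nsmul_le_sum s f 1 hfs
      -- Otherwise some term is at least `2`, hence so is the maximal term `f a`.
      have hlt : ∑ i ∈ s, f i < 2 * #s := by
        by_contra! hge
        obtain ⟨i, hi, h2⟩ : ∃ i ∈ s, 2 ≤ f i :=
          exists_le_of_sum_le hne (by simpa [mul_comm] using hge)
        have := hmax i hi
        omega
      exact (ih hfs hlt).insert ha (by omega)

lemma exists_subset_sum_eq (hs : AttainsAllSums f s) {u : Finset ι} (hsu : s ⊆ u)
    {c : ℤ} (hc : ∑ i ∈ u, f i - ∑ i ∈ s, f i ≤ c) (hcu : c ≤ ∑ i ∈ u, f i) :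
    ∃ t ⊆ u, ∑ i ∈ t, f i = c := by
  classical
  obtain ⟨d, hds, hd⟩ := hs (∑ i ∈ u, f i - c) (by omega) (by omega)
  refine ⟨u \ d, sdiff_subset, ?_⟩
  rw [sum_sdiff_eq_sub (hds.trans hsu), hd, sub_sub_cancel]

lemma isOneSmooth {ℓ : ℕ} {T : Fin ℓ → ℤ} (hT : ∀ i, 0 < T i) (h : AttainsAllSums T univ) :
    IsOneSmooth T := by
  ext c
  constructor
  · rintro ⟨S, hS, rfl⟩
    exact ⟨sum_pos (fun i _ => hT i) hS, sum_le_univ_sum_of_nonneg fun i => (hT i).le⟩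
  · rintro ⟨h1, hc⟩
    obtain ⟨S, -, hS⟩ := h c (by omega) hc
    exact ⟨S, nonempty_of_sum_ne_zero (f := T) (by omega), hS⟩

end AttainsAllSums

section DvdSumFree

variable {ι : Type*} {f : ι → ℤ} {s : Finset ι} {m n : ℕ}

lemma exists_subset_dvd_sum_attainsAllSums (hn : 0 < n) (hf : ∀ i ∈ s, 0 < f i)
    (hs : (m + 1) * n / 2 ≤ #s)
    (hfree : ∀ t ⊆ s, (n : ℤ) ∣ ∑ i ∈ t, f i → ∑ i ∈ t, f i < m * n) :
    ∃ t ⊆ s, t.Nonempty ∧ (n : ℤ) ∣ ∑ i ∈ t, f i ∧ AttainsAllSums f t := by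
  classical
  obtain ⟨t, hts, hdvd, hcompl⟩ := exists_subset_dvd_sum_card_sdiff_lt hn f s
  have hsum : ∑ i ∈ t, f i + n ≤ m * n := by
    have := Int.le_of_dvd (sub_pos.mpr (hfree t hts hdvd)) ((dvd_mul_left _ _).sub hdvd)
    omega
  have hcard : m * n + 1 ≤ 2 * #t + n := by
    have := card_sdiff_add_card_eq_card hts
    rw [add_one_mul] at hs
    omega
  have hlt : ∑ i ∈ t, f i < 2 * #t := by
    zify at hcard
    omega
  have hft : ∀ i ∈ t, 0 < f i := fun i hi => hf i (hts hi)
  have hne : t.Nonempty := by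
    rw [nonempty_iff_ne_empty]
    rintro rfl
    simp at hlt
  exact ⟨t, hts, hne, hdvd, .of_sum_lt_two_mul_card hft hlt⟩

lemma sum_lt_mul_of_dvd_sum_free (hn : 0 < n) (hf : ∀ i ∈ s, 0 < f i)
    (hs : (m + 1) * n / 2 ≤ #s)
    (hfree : ∀ t ⊆ s, (n : ℤ) ∣ ∑ i ∈ t, f i → ∑ i ∈ t, f i < m * n) :
    ∑ i ∈ s, f i < m * n := by
  obtain ⟨t, hts, hne, hdvd, ht⟩ := exists_subset_dvd_sum_attainsAllSums hn hf hs hfree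
  have hn' : (0 : ℤ) < n := Int.natCast_pos.mpr hn
  have hnt : (n : ℤ) ≤ ∑ i ∈ t, f i := Int.le_of_dvd (sum_pos (fun i hi => hf i (hts hi)) hne) hdvd
  have hmod : (∑ i ∈ s, f i) % n + (∑ i ∈ s, f i) / n * n = ∑ i ∈ s, f i :=
    Int.emod_add_ediv_mul _ _
  have hmod0 := Int.emod_nonneg (∑ i ∈ s, f i) hn'.ne'
  have hmodn := Int.emod_lt_of_pos (∑ i ∈ s, f i) hn'
  obtain ⟨d, hds, hd⟩ : ∃ d ⊆ s, ∑ i ∈ d, f i = (∑ i ∈ s, f i) / n * n :=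
    ht.exists_subset_sum_eq hts (by omega) (by omega)
  have hlt := hfree d hds (hd ▸ dvd_mul_left _ _)
  rw [hd] at hlt
  exact Int.lt_mul_of_ediv_lt hn' (lt_of_mul_lt_mul_right hlt hn'.le)

end DvdSumFree

theorem stmt15_general {m n ℓ : ℕ} (hm : 0 < m) (hn : 0 < n) (T : Fin ℓ → ℤ)
    (hT : ∀ i, 0 < T i) (hℓ : (m + 1) * n / 2 ≤ ℓ)
    (hfree : ¬ ∃ S : Finset (Fin ℓ), S.Nonempty ∧ (n : ℤ) ∣ ∑ i ∈ S, T i ∧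
      ((m * n : ℕ) : ℤ) ≤ ∑ i ∈ S, T i) :
    IsOneSmooth T ∧ (∑ i, T i) ≤ ((m * n : ℕ) : ℤ) - 1 := by
  have hmn : (0 : ℤ) < m * n := by positivity
  rw [Nat.cast_mul] at hfree ⊢
  have hsmall : ∀ S ⊆ univ, (n : ℤ) ∣ ∑ i ∈ S, T i → ∑ i ∈ S, T i < m * n := by
    intro S _ hdvd
    by_contra! hge
    exact hfree ⟨S, nonempty_of_sum_ne_zero (hmn.trans_le hge).ne', hdvd, hge⟩
  have hsum : ∑ i, T i < m * n :=
    sum_lt_mul_of_dvd_sum_free hn (fun i _ => hT i) (by rwa [card_fin]) hsmall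
  refine ⟨AttainsAllSums.isOneSmooth hT (.of_sum_lt_two_mul_card (fun i _ => hT i) ?_), by omega⟩
  have hnm : n ≤ m * n := Nat.le_mul_of_pos_left n hm
  rw [add_one_mul] at hℓ
  rw [card_fin]
  zify at hℓ hnm
  omega

theorem stmt15 {k n ℓ : ℕ} (hn : 1 ≤ n) (hkn : n < k) (T : Fin ℓ → ℤ)
    (hT : ∀ i, 1 ≤ T i ∧ T i ≤ (k : ℤ) + n - 1)
    (hℓ : ((k + n - 1) / n + 1) * n / 2 ≤ ℓ)
    (hfree : ¬ ∃ S : Finset (Fin ℓ), S.Nonempty ∧ (n : ℤ) ∣ ∑ i ∈ S, T i ∧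
      (((k + n - 1) / n * n : ℕ) : ℤ) ≤ ∑ i ∈ S, T i) :
    IsOneSmooth T ∧ (∑ i, T i) ≤ (((k + n - 1) / n * n : ℕ) : ℤ) - 1 :=
  stmt15_general (Nat.div_pos (by omega) hn) hn T (fun i => (hT i).1) hℓ hfree
end

section
/- Let n ≥ 1 and let T : Fin ℓ → ZMod n be any sequence. Then the number of subsets S ⊆ Fin ℓ (including the empty set) with ∑_{i∈S} T i = 0 is at least 2^(ℓ − n + 1), where the exponent is interpreted via truncated (natural-number) subtraction. -/
/-!
This is Olson's argument: for a finite abelian group `G` with Davenport constant `D`, every value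
attained as a subset sum of a sequence of length `ℓ` is attained by at least `2 ^ (ℓ + 1 - D)`
subsets. Negating the terms indexed by a set `B` and replacing each `S` by its symmetric difference
with `B` shifts all subset sums by `∑ i ∈ B, f i`, so only the value `0` has to be considered,
where we induct on the length. If `ℓ < D`, the empty set suffices. Otherwise some nonempty `A` has
sum zero; pick `a ∈ A` and delete the term `f a`. The sets avoiding `a` are counted by the induction
hypothesis. Those containing `a` correspond to representations of `- f a` by the remaining terms;
as `A \ {a}` is one of these, the shift turns `- f a` into `0` and the induction hypothesis applies
again. Finally, the pigeonhole principle on prefix sums gives `D ≤ |G|`.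
-/

open Finset

open scoped symmDiff

section DavenportConstant

/-- The Davenport constant of an abelian group: the least `d` such that every sequence of length `d`
has a nonempty zero-sum subsequence. It takes the junk value `0` if there is no such `d`. -/
noncomputable def davenportConst (G : Type*) [AddCommGroup G] : ℕ :=
  sInf {d | ∀ T : Fin d → G, ∃ A : Finset (Fin d), A.Nonempty ∧ ∑ i ∈ A, T i = 0}

variable {G : Type*} [AddCommGroup G] [Finite G]

lemma exists_nonempty_sum_eq_zero_of_card_le {d : ℕ} (hd : Nat.card G ≤ d) (T : Fin d → G) :
    ∃ A : Finset (Fin d), A.Nonempty ∧ ∑ i ∈ A, T i = 0 := by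
  have := Fintype.ofFinite G
  let initial (k : Fin (d + 1)) : Finset (Fin d) := {j | j.castSucc < k}
  obtain ⟨k, l, hkl, hsum⟩ : ∃ k l : Fin (d + 1), k < l ∧
      ∑ j ∈ initial k, T j = ∑ j ∈ initial l, T j := by
    obtain ⟨k, l, hne, hsum⟩ := Fintype.exists_ne_map_eq_of_card_lt
      (fun k ↦ ∑ j ∈ initial k, T j)
      (by rwa [Fintype.card_fin, ← Nat.card_eq_fintype_card, Nat.lt_succ_iff])
    rcases hne.lt_or_gt with hlt | hlt
    exacts [⟨k, l, hlt, hsum⟩, ⟨l, k, hlt, hsum.symm⟩]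
  have hsub : initial k ⊆ initial l := monotone_filter_right _ fun _ _ hj ↦ hj.trans hkl
  refine ⟨initial l \ initial k, ⟨k.castPred (Fin.ne_last_of_lt hkl), ?_⟩, ?_⟩
  · simpa [initial] using hkl
  · rw [sum_sdiff_eq_sub hsub, hsum, sub_self]

lemma davenportConst_le_card : davenportConst G ≤ Nat.card G :=
  Nat.sInf_le (exists_nonempty_sum_eq_zero_of_card_le le_rfl)

lemma davenportConst_zmod_le (n : ℕ) [NeZero n] : davenportConst (ZMod n) ≤ n :=
  davenportConst_le_card.trans_eq (Nat.card_zmod n)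

lemma davenportConst_spec (T : Fin (davenportConst G) → G) :
    ∃ A : Finset (Fin (davenportConst G)), A.Nonempty ∧ ∑ i ∈ A, T i = 0 :=
  Nat.sInf_mem (s := {d | ∀ T : Fin d → G, ∃ A : Finset (Fin d), A.Nonempty ∧ ∑ i ∈ A, T i = 0})
    ⟨Nat.card G, exists_nonempty_sum_eq_zero_of_card_le le_rfl⟩ T

lemma exists_nonempty_subset_sum_eq_zero_s17 {ι : Type*} (f : ι → G) {I : Finset ι}
    (hI : davenportConst G ≤ #I) : ∃ A ⊆ I, A.Nonempty ∧ ∑ i ∈ A, f i = 0 := by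
  obtain ⟨e⟩ : Nonempty (Fin (davenportConst G) ↪ I) :=
    Function.Embedding.nonempty_of_card_le (by simpa using hI)
  let e' := e.trans (Function.Embedding.subtype (· ∈ I))
  obtain ⟨A, hA, hsum⟩ := davenportConst_spec (f ∘ e')
  refine ⟨A.map e', fun i hi ↦ ?_, hA.map, by rwa [sum_map]⟩
  obtain ⟨j, -, rfl⟩ := mem_map.mp hi
  exact (e j).2

end DavenportConstant

section SubsetSums

variable {ι G : Type*} [AddCommGroup G]

lemma sum_piecewise_neg [DecidableEq ι] (f : ι → G) (B S : Finset ι) :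
    ∑ i ∈ S, B.piecewise (-f) f i = ∑ i ∈ S ∆ B, f i - ∑ i ∈ B, f i := by
  have hsymm : ∑ i ∈ S ∆ B, f i = ∑ i ∈ S \ B, f i + ∑ i ∈ B \ S, f i :=
    sum_union disjoint_sdiff_sdiff
  rw [sum_piecewise, hsymm, ← sum_inter_add_sum_sdiff B S f, inter_comm B S]
  simp only [Pi.neg_apply, sum_neg_distrib]
  abel

variable [DecidableEq G]

/-- The number of subsets `S` of the index set `I` over which the terms of `f` sum to `g`. For
`g = 0` and `I = univ` this is the number `N(f)` of zero-sum subsequences, including the empty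
one. -/
def subsetSumCount (f : ι → G) (I : Finset ι) (g : G) : ℕ :=
  #{S ∈ I.powerset | ∑ i ∈ S, f i = g}

lemma subsetSumCount_zero_pos (f : ι → G) (I : Finset ι) : 0 < subsetSumCount f I 0 :=
  card_pos.mpr ⟨∅, by simp⟩

lemma subsetSumCount_insert [DecidableEq ι] (f : ι → G) {I : Finset ι} {a : ι} (ha : a ∉ I)
    (g : G) :
    subsetSumCount f (insert a I) g = subsetSumCount f I g + subsetSumCount f I (g - f a) := by
  simp only [subsetSumCount, card_filter, sum_powerset_insert ha]
  congr 1
  refine sum_congr rfl fun S hS ↦ ?_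
  simp only [sum_insert (notMem_mono (mem_powerset.mp hS) ha), eq_sub_iff_add_eq']

lemma subsetSumCount_piecewise_neg [DecidableEq ι] (f : ι → G) {I B : Finset ι} (hB : B ⊆ I)
    (g : G) :
    subsetSumCount (B.piecewise (-f) f) I g = subsetSumCount f I (g + ∑ i ∈ B, f i) := by
  have hsub {S : Finset ι} (hS : S ⊆ I) : S ∆ B ⊆ I :=
    symmDiff_le_sup.trans (union_subset hS hB)
  refine card_nbij' (· ∆ B) (· ∆ B) (fun S hS ↦ ?_) (fun S hS ↦ ?_)
    (fun S _ ↦ symmDiff_symmDiff_cancel_right B S) (fun S _ ↦ symmDiff_symmDiff_cancel_right B S)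
  all_goals
    simp only [coe_filter, mem_powerset, Set.mem_ofPred_eq, sum_piecewise_neg,
      symmDiff_symmDiff_cancel_right, sub_eq_iff_eq_add] at hS ⊢
    exact ⟨hsub hS.1, hS.2⟩

lemma two_pow_le_subsetSumCount_zero [Finite G] (f : ι → G) (I : Finset ι) :
    2 ^ (#I + 1 - davenportConst G) ≤ subsetSumCount f I 0 := by
  classical
  induction I using Finset.strongInduction generalizing f with
  | H I ih =>
  rcases lt_or_ge #I (davenportConst G) with hI | hI
  · rw [Nat.sub_eq_zero_of_le hI, pow_zero]
    exact subsetSumCount_zero_pos f I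
  obtain ⟨A, hAI, ⟨a, ha⟩, hA⟩ := exists_nonempty_subset_sum_eq_zero_s17 f hI
  have haI : a ∈ I := hAI ha
  let J := I.erase a
  let B := A.erase a
  have hcard : #J + 1 = #I := card_erase_add_one haI
  have hB : ∑ i ∈ B, f i = 0 - f a := by
    rw [eq_sub_iff_add_eq, sum_erase_add A f ha, hA]
  have avoiding : 2 ^ (#J + 1 - davenportConst G) ≤ subsetSumCount f J 0 :=
    ih J (erase_ssubset haI) f
  have containing : 2 ^ (#J + 1 - davenportConst G) ≤ subsetSumCount f J (0 - f a) :=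
    calc 2 ^ (#J + 1 - davenportConst G)
      _ ≤ subsetSumCount (B.piecewise (-f) f) J 0 := ih J (erase_ssubset haI) _
      _ = subsetSumCount f J (0 - f a) := by
        rw [subsetSumCount_piecewise_neg f (erase_subset_erase a hAI), zero_add, hB]
  calc 2 ^ (#I + 1 - davenportConst G)
    _ = 2 ^ (#J + 1 - davenportConst G) + 2 ^ (#J + 1 - davenportConst G) := by
      rw [hcard, Nat.sub_add_comm hI, pow_succ, mul_two]
    _ ≤ subsetSumCount f J 0 + subsetSumCount f J (0 - f a) := add_le_add avoiding containing
    _ = subsetSumCount f I 0 := by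
      rw [← subsetSumCount_insert f (notMem_erase a I), insert_erase haI]

end SubsetSums

theorem stmt17_general {ι G : Type*} [Finite ι] [AddCommGroup G] [Finite G] (f : ι → G)
    (B : Finset ι) :
    2 ^ (Nat.card ι + 1 - davenportConst G) ≤
      Nat.card {S : Finset ι // ∑ i ∈ S, f i = ∑ i ∈ B, f i} := by
  classical
  have := Fintype.ofFinite ι
  calc 2 ^ (Nat.card ι + 1 - davenportConst G)
    _ ≤ subsetSumCount (B.piecewise (-f) f) univ 0 := by
      simpa using two_pow_le_subsetSumCount_zero (B.piecewise (-f) f) univ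
    _ = subsetSumCount f univ (∑ i ∈ B, f i) := by
      rw [subsetSumCount_piecewise_neg f (subset_univ B), zero_add]
    _ = Nat.card {S : Finset ι // ∑ i ∈ S, f i = ∑ i ∈ B, f i} := by
      rw [subsetSumCount, powerset_univ, Nat.card_eq_fintype_card, Fintype.card_subtype]

theorem stmt17 (n ℓ : ℕ) (hn : 1 ≤ n) (T : Fin ℓ → ZMod n) :
    2 ^ (ℓ + 1 - n) ≤ Nat.card {S : Finset (Fin ℓ) // ∑ i ∈ S, T i = 0} := by
  have : NeZero n := ⟨Nat.one_le_iff_ne_zero.mp hn⟩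
  exact (Nat.pow_le_pow_right two_pos (Nat.sub_le_sub_left (davenportConst_zmod_le n) _)).trans
    (by simpa using stmt17_general T ∅)
end
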